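/- arXiv:2411.11634 — 3 statements merged into one kernel-verified Lean document; each statement's English description precedes it below -/
import Mathlib

section
/- Let A ∈ M_n(ℤ) be non-singular with h_A irreducible over ℚ and P'(A) ≠ ∅, and assume there exists a prime p with gcd(n, t_p) = 1. Let K be a number field and λ ∈ K a root of h_A with K = ℚ(λ). Then the ℚ-subalgebra of M_n(ℚ) generated by {T ∈ M_n(ℚ) : T(G_A) ⊆ G_A} is isomorphic as a ℚ-algebra to K (equivalently, End(G_A) ⊗_ℤ ℚ ≅ ℚ(λ)). -/
open Matrix Polynomial

noncomputable section

/-- The matrix `A` viewed over `ℚ`. -/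
def Aq {n : ℕ} (A : Matrix (Fin n) (Fin n) ℤ) : Matrix (Fin n) (Fin n) ℚ :=
  A.map (Int.cast : ℤ → ℚ)

/-- The group `G_A = {A^k x : x ∈ ℤ^n, k ∈ ℤ} ⊆ ℚ^n`. -/
def GA {n : ℕ} (A : Matrix (Fin n) (Fin n) ℤ) : Set (Fin n → ℚ) :=
  {v | ∃ (k : ℤ) (x : Fin n → ℤ), v = (Aq A ^ k) *ᵥ fun i => ((x i : ℚ))}

/-- `P'(A)`: primes dividing `det A` such that `h_A ≢ x^n (mod p)`. -/
def Pbad {n : ℕ} (A : Matrix (Fin n) (Fin n) ℤ) : Set ℕ :=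
  {p | p.Prime ∧ (p : ℤ) ∣ A.det ∧ A.charpoly.map (Int.castRingHom (ZMod p)) ≠ X ^ n}

/-- `t_p`: multiplicity of `0` as a root of `h_A` mod `p`. -/
def tp {n : ℕ} (A : Matrix (Fin n) (Fin n) ℤ) (p : ℕ) : ℕ :=
  Polynomial.rootMultiplicity 0 (A.charpoly.map (Int.castRingHom (ZMod p)))


/-- Combinatorial separation lemma: if `|X|` and `|S|` are coprime then translates of `S`
under a transitive group separate points of `X`. -/
lemma comb_sep {G L : Type*} [Group G] [MulAction G L] (X S : Finset L)
    (hSX : S ⊆ X) (hst : ∀ (g : G) x, x ∈ X → g • x ∈ X)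
    (htr : ∀ x ∈ X, ∀ y ∈ X, ∃ g : G, g • x = y)
    (hcop : Nat.gcd X.card S.card = 1) {x y : L} (hx : x ∈ X) (hy : y ∈ X) (hxy : x ≠ y) :
    ∃ g : G, g • x ∈ S ∧ g • y ∉ S := by
  classical
  by_contra hcon
  push Not at hcon
  let B : L → Finset L := fun a => X.filter (fun b => ∀ g : G, g • a ∈ S → g • b ∈ S)
  have hself : ∀ a ∈ X, a ∈ B a := fun a ha => by simp [B, ha]
  have hBg : ∀ (g : G) a, (B (g • a)).card ≤ (B a).card := by
    intro g a
    refine Finset.card_le_card_of_injOn (fun b => g⁻¹ • b) ?_ ?_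
    · intro b hb
      simp only [B, Finset.coe_filter, Set.mem_ofPred_eq] at hb ⊢
      refine ⟨hst _ _ hb.1, fun k hk => ?_⟩
      have := hb.2 (k * g⁻¹) (by simpa [mul_smul] using hk)
      simpa [mul_smul] using this
    · intro b _ c _ h
      simpa using h
  have hcard : ∀ a ∈ X, ∀ b ∈ X, (B a).card = (B b).card := by
    intro a ha b hb
    obtain ⟨g, hg⟩ := htr a ha b hb
    obtain ⟨k, hk⟩ := htr b hb a ha
    apply le_antisymm
    · rw [← hk]; exact hBg _ _
    · rw [← hg]; exact hBg _ _
  have hsub : ∀ a ∈ X, ∀ b ∈ B a, B b = B a := by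
    intro a ha b hb
    have hbX : b ∈ X := (Finset.mem_filter.1 hb).1
    refine Finset.eq_of_subset_of_card_le ?_ (hcard a ha b hbX).le
    intro c hc
    simp only [B, Finset.mem_filter] at hb hc ⊢
    exact ⟨hc.1, fun g hg => hc.2 g (hb.2 g hg)⟩
  have hdvd : ∀ U : Finset L, U ⊆ X → (∀ a ∈ U, B a ⊆ U) → (B x).card ∣ U.card := by
    intro U hU hsat
    rw [Finset.card_eq_sum_card_image B U]
    refine Finset.dvd_sum fun b hb => ?_
    obtain ⟨a, ha, rfl⟩ := Finset.mem_image.1 hb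
    have : U.filter (fun c => B c = B a) = B a := by
      ext c
      constructor
      · intro hc
        rw [Finset.mem_filter] at hc
        rw [← hc.2]; exact hself c (hU hc.1)
      · intro hc
        rw [Finset.mem_filter]
        exact ⟨hsat a ha hc, hsub a (hU ha) c hc⟩
    rw [this, hcard a (hU ha) x hx]
  have h1 := hdvd X subset_rfl (fun a _ => Finset.filter_subset _ _)
  have h2 := hdvd S hSX (fun a ha b hb => by
    have := (Finset.mem_filter.1 hb).2 1
    simpa using this (by simpa using ha))
  have h3 : (B x).card = 1 := Nat.dvd_one.1 (hcop ▸ Nat.dvd_gcd h1 h2)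
  have h4 : y ∈ B x := by
    simp only [B, Finset.mem_filter]
    exact ⟨hy, hcon⟩
  obtain ⟨z, hz⟩ := Finset.card_eq_one.1 h3
  have h5 := hself x hx
  rw [hz, Finset.mem_singleton] at h4 h5
  exact hxy (h5.trans h4.symm)

/-- A polynomial not divisible by the irreducible characteristic polynomial is invertible
at the matrix. -/
lemma inv_of_not_dvd {n : ℕ} (M : Matrix (Fin n) (Fin n) ℚ) (hirr : Irreducible M.charpoly)
    (q : ℚ[X]) (hq : ¬ M.charpoly ∣ q) : ∃ u : ℚ[X], aeval M u * aeval M q = 1 := by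
  obtain ⟨a, b, hab⟩ := (hirr.coprime_iff_not_dvd).2 hq
  refine ⟨b, ?_⟩
  have := congrArg (aeval M) hab
  simpa [Matrix.aeval_self_charpoly] using this

lemma n_pos {n : ℕ} (M : Matrix (Fin n) (Fin n) ℚ) (hirr : Irreducible M.charpoly) : 0 < n := by
  have := hirr.natDegree_pos
  rwa [Matrix.charpoly_natDegree_eq_dim, Fintype.card_fin] at this

lemma aeval_eq_zero_iff' {n : ℕ} (M : Matrix (Fin n) (Fin n) ℚ) (hirr : Irreducible M.charpoly)
    (q : ℚ[X]) : aeval M q = 0 ↔ M.charpoly ∣ q := by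
  constructor
  · intro h
    by_contra hq
    obtain ⟨u, hu⟩ := inv_of_not_dvd M hirr q hq
    rw [h, mul_zero] at hu
    have := n_pos M hirr
    have : Nonempty (Fin n) := ⟨⟨0, this⟩⟩
    exact zero_ne_one hu
  · rintro ⟨r, rfl⟩
    simp [Matrix.aeval_self_charpoly]

/-- The commutant of a matrix with irreducible characteristic polynomial. -/
lemma commutant {n : ℕ} (M T : Matrix (Fin n) (Fin n) ℚ) (hirr : Irreducible M.charpoly)
    (hT : T * M = M * T) : ∃ q : ℚ[X], T = aeval M q := by
  have hn := n_pos M hirr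
  let e : Fin n → ℚ := Pi.single ⟨0, hn⟩ 1
  have he : e ≠ 0 := by
    intro h
    have := congrFun h ⟨0, hn⟩
    simp [e] at this
  let f : ℚ[X] →ₗ[ℚ] (Fin n → ℚ) :=
    { toFun := fun q => (aeval M q) *ᵥ e
      map_add' := fun a b => by simp [Matrix.add_mulVec]
      map_smul' := fun a b => by simp [Matrix.smul_mulVec] }
  have hinj : Function.Injective (f.comp (degreeLT ℚ n).subtype) := by
    rw [← LinearMap.ker_eq_bot, LinearMap.ker_eq_bot']
    rintro ⟨q, hq⟩ h
    have h' : (aeval M q) *ᵥ e = 0 := h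
    by_contra hne
    have hq0 : q ≠ 0 := fun h => hne (Subtype.ext h)
    have hnd : ¬ M.charpoly ∣ q := by
      intro hd
      have := degree_le_of_dvd hd hq0
      rw [Matrix.charpoly_degree_eq_dim, Fintype.card_fin] at this
      exact absurd (mem_degreeLT.1 hq) (not_lt.2 this)
    obtain ⟨u, hu⟩ := inv_of_not_dvd M hirr q hnd
    apply he
    rw [← Matrix.one_mulVec e, ← hu, ← Matrix.mulVec_mulVec, h', Matrix.mulVec_zero]
  have : FiniteDimensional ℚ (degreeLT ℚ n) := (degreeLTEquiv ℚ n).symm.finiteDimensional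
  have hsurj := (LinearMap.injective_iff_surjective_of_finrank_eq_finrank
    (by rw [(degreeLTEquiv ℚ n).finrank_eq])).1 hinj
  obtain ⟨q, hq⟩ := hsurj (T *ᵥ e)
  have hq' : aeval M q.1 *ᵥ e = T *ᵥ e := hq
  refine ⟨q.1, ?_⟩
  have hc : ∀ r : ℚ[X], T * aeval M r = aeval M r * T := by
    intro r
    have h0 : Commute T M := hT
    induction r using Polynomial.induction_on' with
    | add a b ha hb => simp [mul_add, add_mul, ha, hb]
    | monomial k a =>
      rw [aeval_monomial]
      exact Commute.mul_right (Algebra.commutes a T).symm (h0.pow_right k)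
  apply Matrix.toLin'.injective
  apply LinearMap.ext
  intro v
  obtain ⟨r, hr⟩ := hsurj v
  have hr' : aeval M r.1 *ᵥ e = v := hr
  rw [Matrix.toLin'_apply, Matrix.toLin'_apply, ← hr', Matrix.mulVec_mulVec, Matrix.mulVec_mulVec,
    hc, ← Matrix.mulVec_mulVec, ← hq', Matrix.mulVec_mulVec, ← map_mul, ← map_mul, mul_comm]

lemma iso_of_commute {n : ℕ} (M : Matrix (Fin n) (Fin n) ℚ) (hirr : Irreducible M.charpoly)
    (E : Set (Matrix (Fin n) (Fin n) ℚ)) (hM : M ∈ E) (hE : ∀ T ∈ E, T * M = M * T)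
    (K : Type) [Field K] [Algebra ℚ K] (lam : K) (hroot : aeval lam M.charpoly = 0)
    (hgenK : Algebra.adjoin ℚ ({lam} : Set K) = ⊤) :
    Nonempty (Algebra.adjoin ℚ E ≃ₐ[ℚ] K) := by
  have h1 : Algebra.adjoin ℚ E = (aeval (R := ℚ) M).range := by
    apply le_antisymm
    · refine Algebra.adjoin_le fun T hT => ?_
      obtain ⟨q, hq⟩ := commutant M T hirr (hE T hT)
      exact ⟨q, hq.symm⟩
    · rw [← Algebra.adjoin_singleton_eq_range_aeval]
      exact Algebra.adjoin_mono (by simpa using hM)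
  have h2 : Function.Surjective (aeval (R := ℚ) lam) := by
    rw [← AlgHom.range_eq_top, ← Algebra.adjoin_singleton_eq_range_aeval, hgenK]
  have hk : RingHom.ker (aeval (R := ℚ) M).rangeRestrict = RingHom.ker (aeval (R := ℚ) lam) := by
    ext q
    rw [RingHom.mem_ker, RingHom.mem_ker, ← Subtype.coe_inj]
    change aeval M q = 0 ↔ _
    rw [aeval_eq_zero_iff' M hirr]
    constructor
    · rintro ⟨r, rfl⟩
      simp [hroot]
    · intro h
      by_contra hq
      obtain ⟨a, b, hab⟩ := (hirr.coprime_iff_not_dvd).2 hq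
      have := congrArg (aeval lam) hab
      simp [hroot, h] at this
  rw [h1]
  exact ⟨(Ideal.quotientKerAlgEquivOfSurjective (aeval (R := ℚ) M).rangeRestrict_surjective).symm.trans
    ((Ideal.quotientEquivAlgOfEq ℚ hk).trans (Ideal.quotientKerAlgEquivOfSurjective h2))⟩

open WithZero in
/-- Valuation argument: an integral endomorphism has no component from the topologically nilpotent
eigenspaces to the unit eigenspaces. -/
lemma val_zero {n : ℕ} (A : Matrix (Fin n) (Fin n) ℤ) (hA : A.det ≠ 0)
    {L : Type*} [Field L] [Algebra ℚ L] (v : Valuation L ℤᵐ⁰) (hv : ∀ z : ℤ, v (z : L) ≤ 1)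
    (T : Matrix (Fin n) (Fin n) ℚ) (hT : ∀ x ∈ GA A, T *ᵥ x ∈ GA A)
    (μ ν : L) (hμ : v μ = 1) (hν : v ν < 1) (W V : Matrix (Fin n) (Fin n) L)
    (hW : W * (algebraMap ℚ L).mapMatrix (Aq A) = μ • W)
    (hV : (algebraMap ℚ L).mapMatrix (Aq A) * V = ν • V) :
    W * (algebraMap ℚ L).mapMatrix T * V = 0 := by
  set φ := (algebraMap ℚ L).mapMatrix (m := Fin n) with hφ
  have hdet : IsUnit (Aq A).det := by
    have : (Aq A).det = ((A.det : ℤ) : ℚ) := by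
      simpa [Aq] using ((Int.castRingHom ℚ).map_det A).symm
    rw [this, isUnit_iff_ne_zero]
    exact_mod_cast hA
  have hμ0 : μ ≠ 0 := by
    rintro rfl
    simp at hμ
  have hWinv : W * φ (Aq A)⁻¹ = μ⁻¹ • W := by
    have h1 : W * φ (Aq A) * φ (Aq A)⁻¹ = W := by
      rw [mul_assoc, ← map_mul, Matrix.mul_nonsing_inv _ hdet, map_one, mul_one]
    rw [hW, Matrix.smul_mul] at h1
    rw [← h1, smul_smul, inv_mul_cancel₀ hμ0, one_smul, h1]
  have hWz : ∀ k : ℤ, W * φ (Aq A ^ k) = μ ^ k • W := by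
    intro k
    induction k using Int.induction_on with
    | zero => simp
    | succ k ih =>
      rw [Matrix.zpow_add_one hdet, map_mul, ← mul_assoc, ih, Matrix.smul_mul, hW, smul_smul,
        zpow_add_one₀ hμ0]
    | pred k ih =>
      rw [Matrix.zpow_sub_one hdet, map_mul, ← mul_assoc, ih, Matrix.smul_mul, hWinv, smul_smul,
        zpow_sub_one₀ hμ0]
  have hVn : ∀ k : ℕ, φ (Aq A ^ k) * V = ν ^ k • V := by
    intro k
    induction k with
    | zero => simp
    | succ k ih =>
      rw [pow_succ, map_mul, mul_assoc, hV, Matrix.mul_smul, ih, smul_smul, pow_succ, mul_comm]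
  have hVz : ∀ k : ℕ, V = ν ^ k • (φ (Aq A ^ (-(k : ℤ))) * V) := by
    intro k
    rw [← Matrix.mul_smul, ← hVn, ← mul_assoc, ← map_mul, ← zpow_natCast, Matrix.zpow_neg_mul_zpow_self _ hdet]
    simp
  obtain ⟨BW, hBW⟩ : ∃ B : ℤᵐ⁰, ∀ i j, v (W i j) ≤ B := by
    obtain ⟨B, hB⟩ := Finite.bddAbove_range (fun q : Fin n × Fin n => v (W q.1 q.2))
    exact ⟨B, fun i j => hB ⟨(i, j), rfl⟩⟩
  obtain ⟨BV, hBV⟩ : ∃ B : ℤᵐ⁰, ∀ i j, v (V i j) ≤ B := by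
    obtain ⟨B, hB⟩ := Finite.bddAbove_range (fun q : Fin n × Fin n => v (V q.1 q.2))
    exact ⟨B, fun i j => hB ⟨(i, j), rfl⟩⟩
  have key : ∀ (k : ℕ) i l, v ((W * φ (T * Aq A ^ (-(k : ℤ)))) i l) ≤ BW := by
    intro k i l
    have hmem : T *ᵥ (Aq A ^ (-(k : ℤ)) *ᵥ (Pi.single l 1 : Fin n → ℚ)) ∈ GA A := by
      refine hT _ ⟨-(k : ℤ), Pi.single l 1, ?_⟩
      congr 1
      ext s
      by_cases h : s = l
      · subst h; simp
      · simp [h]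
    obtain ⟨m, y, hy⟩ := hmem
    have hcol : ∀ s, (T * Aq A ^ (-(k : ℤ))) s l = ((Aq A ^ m) *ᵥ fun i => (y i : ℚ)) s := by
      intro s
      rw [← hy, Matrix.mulVec_mulVec, Matrix.mulVec_single_one]
      rfl
    have h1 : (W * φ (T * Aq A ^ (-(k : ℤ)))) i l = μ ^ m * ∑ s, W i s * (y s : L) := by
      have h2 : (W * φ (T * Aq A ^ (-(k : ℤ)))) i l
          = ((W * φ (Aq A ^ m)) *ᵥ fun s => (y s : L)) i := by
        rw [← Matrix.mulVec_mulVec, Matrix.mul_apply]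
        simp only [Matrix.mulVec, dotProduct]
        refine Finset.sum_congr rfl fun s _ => ?_
        congr 1
        rw [hφ, RingHom.mapMatrix_apply, Matrix.map_apply, hcol]
        simp only [Matrix.mulVec, dotProduct, map_sum, map_mul, map_intCast]
        rfl
      rw [h2, hWz]
      simp [Matrix.mulVec, dotProduct, Finset.mul_sum, mul_assoc]
    rw [h1, map_mul, map_zpow₀, hμ, _root_.one_zpow, one_mul]
    refine v.map_sum_le fun s _ => ?_
    rw [map_mul]
    exact (mul_le_of_le_one_right' (hv _)).trans (hBW _ _)
  ext i j
  rw [Matrix.zero_apply, ← v.zero_iff]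
  have hb : ∀ k : ℕ, v ((W * φ T * V) i j) ≤ v ν ^ k * (BW * BV) := by
    intro k
    have : W * φ T * V = ν ^ k • (W * φ (T * Aq A ^ (-(k : ℤ))) * V) := by
      conv_lhs => rw [hVz k]
      rw [Matrix.mul_smul, map_mul]
      simp only [mul_assoc]
    rw [this, Matrix.smul_apply, smul_eq_mul, map_mul, map_pow]
    gcongr
    rw [Matrix.mul_apply]
    refine v.map_sum_le fun s _ => ?_
    rw [map_mul]
    gcongr
    · exact key _ _ _
    · exact hBV _ _
  by_contra hne
  have hC : BW * BV ≠ 0 := by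
    intro h
    have := hb 0
    rw [h, mul_zero] at this
    exact hne (le_antisymm this zero_le)
  obtain ⟨k, hk⟩ := exists_pow_lt₀ hν (Units.mk0 (v ((W * φ T * V) i j) / (BW * BV)) (div_ne_zero hne hC))
  rw [Units.val_mk0, lt_div_iff₀ (zero_lt_iff.2 hC)] at hk
  exact absurd (hb k) (not_le.2 hk)

/-- If `T` kills all the off-diagonal eigen-components, it commutes with `M`. -/
lemma commute_of_offdiag {n : ℕ} {L : Type*} [Field L] (M T : Matrix (Fin n) (Fin n) L)
    (X : Finset L) (hne : X.Nonempty) (hX : M.charpoly = ∏ x ∈ X, (Polynomial.X - C x))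
    (h : ∀ μ ∈ X, ∀ ν ∈ X, μ ≠ ν → ∀ W V : Matrix (Fin n) (Fin n) L,
      W * M = μ • W → M * V = ν • V → W * T * V = 0) : T * M = M * T := by
  classical
  let e : L → Matrix (Fin n) (Fin n) L := fun x => aeval M (Lagrange.basis X id x)
  have hsum : ∑ x ∈ X, e x = 1 := by
    have := congrArg (aeval M) (Lagrange.sum_basis (s := X) (v := (id : L → L))
      (Set.injOn_id _) hne)
    simpa [e] using this
  have hz : ∀ x ∈ X, aeval M ((Polynomial.X - C x) * Lagrange.basis X id x) = 0 := by
    intro x hx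
    have : M.charpoly ∣ (Polynomial.X - C x) * Lagrange.basis X id x := by
      rw [hX, Lagrange.basis, ← Finset.mul_prod_erase _ _ hx]
      refine mul_dvd_mul_left _ (Finset.prod_dvd_prod_of_dvd _ _ fun y _ => ?_)
      rw [Lagrange.basisDivisor]
      exact Dvd.intro_left _ rfl
    obtain ⟨r, hr⟩ := this
    rw [hr, map_mul, Matrix.aeval_self_charpoly, zero_mul]
  have hV : ∀ x ∈ X, M * e x = x • e x := by
    intro x hx
    have := hz x hx
    rw [map_mul, map_sub, aeval_X, aeval_C, sub_mul, sub_eq_zero] at this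
    rw [this, Algebra.smul_def]
  have hW : ∀ x ∈ X, e x * M = x • e x := by
    intro x hx
    have := hz x hx
    rw [mul_comm, map_mul, map_sub, aeval_X, aeval_C, mul_sub, sub_eq_zero] at this
    rw [this, Algebra.smul_def, Algebra.commutes]
  have h0 : ∀ x ∈ X, ∀ y ∈ X, e x * (T * M - M * T) * e y = 0 := by
    intro x hx y hy
    have h1 : e x * (T * M - M * T) * e y = (y - x) • (e x * T * e y) := by
      rw [mul_sub, sub_mul, ← mul_assoc, ← mul_assoc, hW x hx, mul_assoc _ M, hV y hy, sub_smul]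
      simp
    rw [h1]
    by_cases hxy : x = y
    · simp [hxy]
    · rw [h x hx y hy hxy _ _ (hW x hx) (hV y hy), smul_zero]
  rw [← sub_eq_zero]
  calc T * M - M * T = (∑ x ∈ X, e x) * (T * M - M * T) * (∑ x ∈ X, e x) := by
        rw [hsum, one_mul, mul_one]
    _ = 0 := by
        rw [Finset.sum_mul, Finset.sum_mul_sum]
        exact Finset.sum_eq_zero fun x hx => Finset.sum_eq_zero fun y hy => h0 x hx y hy

open NumberField IsDedekindDomain in
/-- The number of roots in the prime is the multiplicity of `0` modulo `p`. -/
lemma card_count {L : Type*} [Field L] [NumberField L] (h : ℤ[X]) (hm : h.Monic) (R : Finset L)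
    (hR : h.map (Int.castRingHom L) = ∏ x ∈ R, (X - C x)) (p : ℕ) (hp : p.Prime)
    (v : HeightOneSpectrum (𝓞 L)) (hpv : (p : 𝓞 L) ∈ v.asIdeal) :
    rootMultiplicity 0 (h.map (Int.castRingHom (ZMod p))) =
      (R.filter (fun x => v.valuation L x < 1)).card := by
  classical
  have : v.asIdeal.IsMaximal := v.isMaximal
  let F := 𝓞 L ⧸ v.asIdeal
  let _ : Field F := Ideal.Quotient.field v.asIdeal
  have : Fact p.Prime := ⟨hp⟩
  have hint : ∀ x : R, IsIntegral ℤ (x : L) := by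
    intro x
    refine ⟨h, hm, ?_⟩
    have : (h.map (Int.castRingHom L)).eval (x : L) = 0 := by
      rw [hR, eval_prod]
      exact Finset.prod_eq_zero x.2 (by simp)
    rwa [eval_map] at this
  let r : R → 𝓞 L := fun x => ⟨x, hint x⟩
  have hr : ∀ x : R, algebraMap (𝓞 L) L (r x) = x := fun x => rfl
  have hO : h.map (Int.castRingHom (𝓞 L)) = ∏ x : R, (X - C (r x)) := by
    apply Polynomial.map_injective (algebraMap (𝓞 L) L) (RingOfIntegers.coe_injective)
    rw [Polynomial.map_map, Polynomial.map_prod]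
    simp only [Polynomial.map_sub, map_X, map_C, hr]
    rw [Finset.prod_coe_sort R (fun x => (X - C x : L[X])), ← hR]
    congr 1
  let q : 𝓞 L →+* F := Ideal.Quotient.mk v.asIdeal
  have hpF : (p : F) = 0 := by
    have : q (p : 𝓞 L) = 0 := Ideal.Quotient.eq_zero_iff_mem.2 hpv
    simpa using this
  have : CharP F p := by
    rw [← CharP.ringChar_of_prime_eq_zero hp hpF]
    infer_instance
  let ψ : ZMod p →+* F := ZMod.castHom dvd_rfl F
  have hF : (h.map (Int.castRingHom (ZMod p))).map ψ = ∏ x : R, (X - C (q (r x))) := by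
    have := congrArg (Polynomial.map q) hO
    rw [Polynomial.map_map, Polynomial.map_prod] at this
    simp only [Polynomial.map_sub, map_X, map_C] at this
    rw [← this, Polynomial.map_map]
    congr 1
    exact RingHom.ext_int _ _
  rw [eq_rootMultiplicity_map (f := ψ) ψ.injective 0, hF, map_zero, ← count_roots]
  have hroots : (∏ x : R, (X - C (q (r x)))).roots
      = Finset.univ.val.map (fun x : R => q (r x)) := by
    rw [← roots_multiset_prod_X_sub_C (Finset.univ.val.map (fun x : R => q (r x))),
      Multiset.map_map]
    rfl
  rw [hroots, Multiset.count_map, ← Finset.filter_val, Finset.card_val]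
  refine Finset.card_bij (fun x _ => x.1) ?_ ?_ ?_
  · intro x hx
    rw [Finset.mem_filter] at hx ⊢
    refine ⟨x.2, ?_⟩
    rw [← hr, v.valuation_lt_one_iff_mem]
    exact Ideal.Quotient.eq_zero_iff_mem.1 hx.2.symm
  · intro x _ y _ hxy
    exact Subtype.ext hxy
  · intro x hx
    rw [Finset.mem_filter] at hx
    refine ⟨⟨x, hx.1⟩, ?_, rfl⟩
    rw [Finset.mem_filter]
    refine ⟨Finset.mem_univ _, ?_⟩
    have h2 : v.valuation L (algebraMap (𝓞 L) L (r ⟨x, hx.1⟩)) < 1 := hx.2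
    rw [v.valuation_lt_one_iff_mem] at h2
    exact (Ideal.Quotient.eq_zero_iff_mem.2 h2).symm

open NumberField IsDedekindDomain in
lemma exists_prime_above (L : Type*) [Field L] [NumberField L] (p : ℕ) (hp : p.Prime) :
    ∃ v : HeightOneSpectrum (𝓞 L), (p : 𝓞 L) ∈ v.asIdeal := by
  have hpZ : Prime (p : ℤ) := Nat.prime_iff_prime_int.1 hp
  have : (Ideal.span {(p : ℤ)}).IsMaximal :=
    PrincipalIdealRing.isMaximal_of_irreducible hpZ.irreducible
  obtain ⟨P, hP, hle⟩ := Ideal.exists_ideal_over_maximal_of_isIntegral (S := 𝓞 L)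
    (Ideal.span {(p : ℤ)}) (by
      rw [(RingHom.injective_iff_ker_eq_bot _).1 (RingHom.injective_int (algebraMap ℤ (𝓞 L)))]
      exact bot_le)
  have hmem : (p : 𝓞 L) ∈ P := by
    have : (p : ℤ) ∈ P.comap (algebraMap ℤ (𝓞 L)) := hle ▸ Ideal.mem_span_singleton_self _
    simpa using this
  refine ⟨⟨P, hP.isPrime, ?_⟩, hmem⟩
  rintro rfl
  rw [Ideal.mem_bot] at hmem
  exact hp.ne_zero (by exact_mod_cast hmem)

open NumberField IsDedekindDomain in
/-- Every endomorphism of `G_A` commutes with `A`. -/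
lemma end_commute_aux (n : ℕ) (A : Matrix (Fin n) (Fin n) ℤ) (hA : A.det ≠ 0)
    (hirr : Irreducible (Aq A).charpoly)
    (L : Type) [Field L] [NumberField L] [IsSplittingField ℚ L (Aq A).charpoly]
    (hcop : ∃ p : ℕ, p.Prime ∧ Nat.gcd n (tp A p) = 1)
    (T : Matrix (Fin n) (Fin n) ℚ) (hT : ∀ x ∈ GA A, T *ᵥ x ∈ GA A) :
    T * Aq A = Aq A * T := by
  classical
  obtain ⟨p, hp, hgcd⟩ := hcop
  set φ := (algebraMap ℚ L).mapMatrix (m := Fin n) with hφ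
  let hL : L[X] := (Aq A).charpoly.map (algebraMap ℚ L)
  let R : Finset L := hL.roots.toFinset
  have hmon : (Aq A).charpoly.Monic := Matrix.charpoly_monic _
  have hnodup : hL.roots.Nodup := nodup_roots (hirr.separable.map)
  have hRprod : hL = ∏ x ∈ R, (X - C x) := by
    have h1 : hL = (hL.roots.map fun a => X - C a).prod :=
      (IsSplittingField.splits L (Aq A).charpoly).eq_prod_roots_of_monic (hmon.map _)
    rw [Finset.prod, Multiset.toFinset_val, hnodup.dedup]
    exact h1
  have hcard : R.card = n := by
    have h1 := congrArg natDegree hRprod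
    rw [natDegree_prod_of_monic _ _ (fun x _ => monic_X_sub_C x)] at h1
    simp only [natDegree_X_sub_C, Finset.sum_const, smul_eq_mul, mul_one] at h1
    rw [← h1, hmon.natDegree_map, Matrix.charpoly_natDegree_eq_dim, Fintype.card_fin]
  have hmemR : ∀ x, x ∈ R ↔ aeval x (Aq A).charpoly = 0 := by
    intro x
    rw [Multiset.mem_toFinset, mem_roots (hmon.map _).ne_zero, IsRoot.def, eval_map_algebraMap]
  have hchar : A.charpoly.map (Int.castRingHom L) = hL := by
    have : (Aq A).charpoly = A.charpoly.map (Int.castRingHom ℚ) := by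
      rw [← Matrix.charpoly_map]; rfl
    change _ = (Aq A).charpoly.map _
    rw [this, Polynomial.map_map]
    congr 1
    exact RingHom.ext_int _ _
  obtain ⟨v, hv⟩ := exists_prime_above L p hp
  let S := R.filter (fun x => v.valuation L x < 1)
  have htp : tp A p = S.card :=
    card_count A.charpoly (Matrix.charpoly_monic _) R (hchar.trans hRprod) p hp v hv
  have hle : ∀ x ∈ R, v.valuation L x ≤ 1 := by
    intro x hx
    have hint : IsIntegral ℤ x := by
      refine ⟨A.charpoly, Matrix.charpoly_monic _, ?_⟩
      have := (hmemR x).1 hx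
      rw [← eval_map_algebraMap] at this
      change eval x hL = 0 at this
      rw [← hchar, eval_map] at this
      exact this
    exact v.valuation_le_one (⟨x, hint⟩ : 𝓞 L)
  have hvz : ∀ z : ℤ, v.valuation L (z : L) ≤ 1 := by
    intro z
    have := v.valuation_le_one (K := L) (z : 𝓞 L)
    simpa using this
  have hmin : ∀ x ∈ R, (Aq A).charpoly = minpoly ℚ x := fun x hx =>
    minpoly.eq_of_irreducible_of_monic hirr ((hmemR x).1 hx) hmon
  have hnorm : Normal ℚ L := Normal.of_isSplittingField (Aq A).charpoly
  have hne : R.Nonempty := by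
    rw [← Finset.card_pos, hcard]; exact n_pos _ hirr
  have hcomm : φ T * φ (Aq A) = φ (Aq A) * φ T := by
    refine commute_of_offdiag _ _ R hne ?_ ?_
    · rw [← hRprod]
      exact Matrix.charpoly_map _ _
    intro μ hμ ν hν hμν W V hW hV
    obtain ⟨g, hg1, hg2⟩ := comb_sep (G := L ≃ₐ[ℚ] L) R S (Finset.filter_subset _ _)
      (by
        intro g x hx
        rw [hmemR] at hx ⊢
        rw [AlgEquiv.smul_def, ← AlgEquiv.coe_toAlgHom, aeval_algHom_apply, hx, map_zero])
      (by
        intro x hx y hy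
        obtain ⟨σ, hσ⟩ := minpoly.exists_algEquiv_of_root (K := ℚ) (x := x) (y := y)
          (Algebra.IsAlgebraic.isAlgebraic y) (by rw [← hmin y hy]; exact (hmemR x).1 hx)
        exact ⟨σ, hσ⟩)
      (by rw [hcard, ← htp]; exact hgcd) hν hμ hμν.symm
    let γ := (g : L →+* L).mapMatrix (m := Fin n)
    have hγ : ∀ M, γ (φ M) = φ M := by
      intro M
      ext i j
      exact g.commutes _
    have hγs : ∀ (c : L) M, γ (c • M) = g c • γ M := by
      intro c M
      ext i j
      simp [γ]
    have hmem : g μ ∈ R := by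
      rw [hmemR] at hμ ⊢
      rw [← AlgEquiv.coe_toAlgHom, aeval_algHom_apply, hμ, map_zero]
    have h1 : v.valuation L (g ν) < 1 := (Finset.mem_filter.1 hg1).2
    have h2 : v.valuation L (g μ) = 1 := by
      refine le_antisymm (hle _ hmem) (not_lt.1 fun hlt => hg2 ?_)
      exact Finset.mem_filter.2 ⟨hmem, hlt⟩
    have h3 := val_zero A hA (v.valuation L) hvz T hT (g μ) (g ν) h2 h1 (γ W) (γ V)
      (by rw [← hφ, ← hγ (Aq A), ← map_mul, hW, hγs])
      (by rw [← hφ, ← hγ (Aq A), ← map_mul, hV, hγs])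
    rw [← hφ, ← hγ T, ← map_mul, ← map_mul] at h3
    have hinj : Function.Injective γ := by
      intro M N hMN
      ext i j
      exact g.injective (congrFun (congrFun hMN i) j)
    exact hinj (h3.trans (map_zero γ).symm)
  rw [← map_mul, ← map_mul] at hcomm
  ext i j
  exact (algebraMap ℚ L).injective (congrFun (congrFun hcomm i) j)

/-- Every endomorphism of `G_A` commutes with `A`. -/
lemma end_commute (n : ℕ) (A : Matrix (Fin n) (Fin n) ℤ) (hA : A.det ≠ 0)
    (hirr : Irreducible (Aq A).charpoly)
    (hcop : ∃ p : ℕ, p.Prime ∧ Nat.gcd n (tp A p) = 1)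
    (T : Matrix (Fin n) (Fin n) ℚ) (hT : ∀ x ∈ GA A, T *ᵥ x ∈ GA A) :
    T * Aq A = Aq A * T := by
  have h0 : CharZero (Aq A).charpoly.SplittingField :=
    charZero_of_injective_algebraMap (algebraMap ℚ (Aq A).charpoly.SplittingField).injective
  have h1 : @IsSplittingField ℚ (Aq A).charpoly.SplittingField _ _ DivisionRing.toRatAlgebra
      (Aq A).charpoly := by
    convert IsSplittingField.splittingField (Aq A).charpoly
    exact Subsingleton.elim _ _
  have h2 : NumberField (Aq A).charpoly.SplittingField :=
    { to_charZero := h0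
      to_finiteDimensional := IsSplittingField.finiteDimensional _ (Aq A).charpoly }
  exact end_commute_aux n A hA hirr (Aq A).charpoly.SplittingField hcop T hT

lemma Aq_mem_end {n : ℕ} (A : Matrix (Fin n) (Fin n) ℤ) (hA : A.det ≠ 0) :
    ∀ x ∈ GA A, Aq A *ᵥ x ∈ GA A := by
  rintro _ ⟨k, x, rfl⟩
  have hdet : IsUnit (Aq A).det := by
    have : (Aq A).det = ((A.det : ℤ) : ℚ) := by
      simpa [Aq] using ((Int.castRingHom ℚ).map_det A).symm
    rw [this, isUnit_iff_ne_zero]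
    exact_mod_cast hA
  refine ⟨1 + k, x, ?_⟩
  rw [Matrix.mulVec_mulVec, Matrix.zpow_one_add hdet]

/-- the `ℚ`-subalgebra of `M_n(ℚ)` generated by `End(G_A)` is isomorphic,
as a `ℚ`-algebra, to `K = ℚ(λ)`. -/
theorem stmt11 (n : ℕ) (A : Matrix (Fin n) (Fin n) ℤ) (hA : A.det ≠ 0)
    (hirr : Irreducible (A.charpoly.map (Int.castRingHom ℚ)))
    (hP' : (Pbad A).Nonempty)
    (hcop : ∃ p : ℕ, p.Prime ∧ Nat.gcd n (tp A p) = 1)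
    (K : Type) [Field K] [NumberField K] (lam : K)
    (hroot : Polynomial.aeval lam (A.charpoly.map (Int.castRingHom ℚ)) = 0)
    (hgenK : Algebra.adjoin ℚ ({lam} : Set K) = ⊤) :
    Nonempty
      ((Algebra.adjoin ℚ {T : Matrix (Fin n) (Fin n) ℚ | ∀ v ∈ GA A, T *ᵥ v ∈ GA A})
        ≃ₐ[ℚ] K) := by
  have hchar : A.charpoly.map (Int.castRingHom ℚ) = (Aq A).charpoly := by
    rw [← Matrix.charpoly_map]; rfl
  rw [hchar] at hirr hroot
  exact iso_of_commute (Aq A) hirr {T | ∀ v ∈ GA A, T *ᵥ v ∈ GA A} (Aq_mem_end A hA)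
    (fun T hT => end_commute n A hA hirr hcop T hT) K lam hroot hgenK
end
end

section
/- Let A ∈ M_2(ℤ) be non-singular with h_A irreducible over ℚ and P'(A) ≠ ∅. Let K be a number field with ring of integers O_K, λ ∈ O_K a root of h_A with K = ℚ(λ), and let u ∈ K^2 be a nonzero vector with (A over K)·u = λ·u. Let T ∈ M_2(ℚ) and x ∈ K be such that (T over K)·u = x·u (equivalently, T commutes with A and x is the eigenvalue of T at u). Then T(G_A) ⊆ G_A if and only if every entry of T lies in ℤ[1/det A] and λ^k·x ∈ O_K for some k ∈ ℕ. -/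
open Matrix Polynomial

noncomputable section

/-- The ring `ℤ[1 / det A] ⊆ ℚ`. -/
def Rdet {n : ℕ} (A : Matrix (Fin n) (Fin n) ℤ) : Set ℚ :=
  {r | ∃ (a : ℤ) (l : ℕ), r = (a : ℚ) / ((A.det : ℚ)) ^ l}


lemma aux_modp (p : ℕ) (hp : p.Prime) (A S : Matrix (Fin 2) (Fin 2) ℤ) (hc : A * S = S * A)
    (hd : (p : ℤ) ∣ A.det) (ht : ¬ (p : ℤ) ∣ A.trace) (hSt : (p : ℤ) ∣ S.trace)
    (hSd : (p : ℤ) ∣ S.det) : ∀ i j, (p : ℤ) ∣ S i j := by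
  have : Fact p.Prime := ⟨hp⟩
  have h00 := congrFun (congrFun hc 0) 0
  have h01 := congrFun (congrFun hc 0) 1
  have h10 := congrFun (congrFun hc 1) 0
  have h11 := congrFun (congrFun hc 1) 1
  simp only [Matrix.mul_apply, Fin.sum_univ_two] at h00 h01 h10 h11
  rw [Matrix.det_fin_two] at hd hSd
  rw [Matrix.trace_fin_two] at ht hSt
  simp only [← ZMod.intCast_zmod_eq_zero_iff_dvd] at *
  replace h00 := congrArg (Int.cast : ℤ → ZMod p) h00
  replace h01 := congrArg (Int.cast : ℤ → ZMod p) h01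
  replace h10 := congrArg (Int.cast : ℤ → ZMod p) h10
  push_cast at *
  generalize (A 0 0 : ZMod p) = a at *
  generalize (A 0 1 : ZMod p) = b at *
  generalize (A 1 0 : ZMod p) = c at *
  generalize (A 1 1 : ZMod p) = d at *
  have hs : ((S 0 0 : ℤ) : ZMod p) = 0 ∧ ((S 0 1 : ℤ) : ZMod p) = 0 ∧ ((S 1 0 : ℤ) : ZMod p) = 0 ∧
      ((S 1 1 : ℤ) : ZMod p) = 0 := by
    generalize ((S 0 0 : ℤ) : ZMod p) = e at *
    generalize ((S 0 1 : ℤ) : ZMod p) = f at *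
    generalize ((S 1 0 : ℤ) : ZMod p) = g at *
    generalize ((S 1 1 : ℤ) : ZMod p) = h at *
    have r1 : b * g = c * f := by linear_combination h00
    have r2 : b * (e - h) = (a - d) * f := by linear_combination - h01
    have r3 : c * (e - h) = (a - d) * g := by linear_combination h10
    have q : (e - h)^2 + 4 * f * g = 0 := by linear_combination (e + h) * hSt - 4 * hSd
    have key : ∀ w : ZMod p, w^2 * (a + d)^2 = 0 → w = 0 := by
      intro w hw
      simpa [ht] using hw
    have qa : (a+d)^2 = (a-d)^2 + 4*b*c := by linear_combination 4 * hd
    have hf : f = 0 := key f (by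
      rw [qa]; linear_combination b^2*q - (b*(e-h) + (a-d)*f)*r2 - 4*b*f*r1)
    have hg : g = 0 := key g (by
      rw [qa]; linear_combination c^2*q - (c*(e-h) + (a-d)*g)*r3 + 4*c*g*r1)
    have he : e - h = 0 := by simpa [hf] using q
    have hee : e = 0 := by
      have : e^2 = 0 := by linear_combination hSd + e * he + f * hg
      simpa using this
    exact ⟨hee, hf, hg, by linear_combination hSt - hee⟩
  obtain ⟨h1, h2, h3, h4⟩ := hs
  intro i j
  fin_cases i <;> fin_cases j <;> assumption

lemma aux_map_inj (M N : Matrix (Fin 2) (Fin 2) ℤ)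
    (h : M.map (Int.cast : ℤ → ℚ) = N.map (Int.cast : ℤ → ℚ)) : M = N := by
  ext i j
  have := congrFun (congrFun h i) j
  simpa using this

lemma aux_map_mul {R : Type*} [Ring R] (M N : Matrix (Fin 2) (Fin 2) ℤ) :
    (M * N).map (Int.cast : ℤ → R) = M.map (Int.cast : ℤ → R) * N.map (Int.cast : ℤ → R) :=
  Matrix.map_mul (f := Int.castRingHom R)

lemma aux_map_mulQ {R : Type*} [Field R] [CharZero R] (M N : Matrix (Fin 2) (Fin 2) ℚ) :
    (M * N).map (Rat.cast : ℚ → R) = M.map (Rat.cast : ℚ → R) * N.map (Rat.cast : ℚ → R) :=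
  Matrix.map_mul (f := Rat.castHom R)

lemma aux_map_pow (M : Matrix (Fin 2) (Fin 2) ℤ) (k : ℕ) :
    (M ^ k).map (Int.cast : ℤ → ℚ) = (M.map (Int.cast : ℤ → ℚ)) ^ k :=
  map_pow (Int.castRingHom ℚ).mapMatrix M k

/-- rows are independent against `u` -/
lemma aux_indep (A : Matrix (Fin 2) (Fin 2) ℤ)
    (hirr : Irreducible (A.charpoly.map (Int.castRingHom ℚ)))
    (K : Type) [Field K] [NumberField K] (lam : K)
    (hroot : Polynomial.aeval lam (A.charpoly.map (Int.castRingHom ℚ)) = 0)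
    (u : Fin 2 → K) (hu : u ≠ 0)
    (hAu : (A.map (Int.cast : ℤ → K)) *ᵥ u = lam • u) (r s : ℚ)
    (h : (r : K) * u 0 + (s : K) * u 1 = 0) : r = 0 ∧ s = 0 := by
  have hrat : ∀ q : ℚ, lam ≠ (q : K) := by
    rintro q rfl
    have h1 : (A.charpoly.map (Int.castRingHom ℚ)).IsRoot q := by
      have : (q : K) = algebraMap ℚ K q := by simp
      rw [this, Polynomial.aeval_algebraMap_apply] at hroot
      simpa [Polynomial.IsRoot] using hroot
    have h2 := Polynomial.degree_eq_one_of_irreducible_of_root hirr h1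
    rw [(A.charpoly_monic).degree_map, Matrix.charpoly_degree_eq_dim] at h2
    simp at h2
  have e0 := congrFun hAu 0
  have e1 := congrFun hAu 1
  simp only [Matrix.mulVec, dotProduct, Fin.sum_univ_two, Matrix.map_apply, Pi.smul_apply,
    smul_eq_mul] at e0 e1
  by_cases hs : s = 0
  · subst hs
    refine ⟨?_, rfl⟩
    by_contra hr
    have hr' : (r : K) ≠ 0 := by exact_mod_cast hr
    have hu0 : u 0 = 0 := by simpa [hr'] using h
    have hu1 : u 1 ≠ 0 := by
      intro h1; apply hu; ext i; fin_cases i <;> simp [hu0, h1]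
    apply hrat (A 1 1 : ℚ)
    rw [hu0] at e1
    push_cast
    exact mul_right_cancel₀ hu1 (by linear_combination - e1)
  · exfalso
    have hs' : (s : K) ≠ 0 := by exact_mod_cast hs
    have hu0 : u 0 ≠ 0 := by
      intro h0
      have h1 : u 1 = 0 := by simpa [hs', h0] using h
      apply hu; ext i; fin_cases i <;> simp [h0, h1]
    apply hrat ((A 0 0 : ℚ) - A 0 1 * r / s)
    push_cast
    apply mul_right_cancel₀ hu0
    apply mul_left_cancel₀ hs'
    have hrs : (s : K) * ((A 0 1 : K) * r / s) = A 0 1 * r := by field_simp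
    linear_combination (-(s : K)) * e0 + (A 0 1 : K) * h + u 0 * hrs

lemma aux_eq (u : Fin 2 → K) [Field K] [CharZero K]
    (hind : ∀ r s : ℚ, (r : K) * u 0 + (s : K) * u 1 = 0 → r = 0 ∧ s = 0)
    (M N : Matrix (Fin 2) (Fin 2) ℚ)
    (h : M.map (Rat.cast : ℚ → K) *ᵥ u = N.map (Rat.cast : ℚ → K) *ᵥ u) : M = N := by
  have key : ∀ i, M i 0 = N i 0 ∧ M i 1 = N i 1 := by
    intro i
    have e := congrFun h i
    simp only [Matrix.mulVec, dotProduct, Fin.sum_univ_two, Matrix.map_apply] at e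
    have := hind (M i 0 - N i 0) (M i 1 - N i 1) (by push_cast; linear_combination e)
    exact ⟨by linarith [this.1], by linarith [this.2]⟩
  ext i j
  fin_cases j
  · exact (key i).1
  · exact (key i).2

/-- trace and determinant are integers -/
lemma aux_int (K : Type) [Field K] [NumberField K] (u : Fin 2 → K)
    (hind : ∀ r s : ℚ, (r : K) * u 0 + (s : K) * u 1 = 0 → r = 0 ∧ s = 0)
    (T : Matrix (Fin 2) (Fin 2) ℚ) (x : K)
    (hTu : (T.map (Rat.cast : ℚ → K)) *ᵥ u = x • u) (hx : IsIntegral ℤ x) :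
    (∃ a : ℤ, T.trace = a) ∧ ∃ b : ℤ, T.det = b := by
  have e0 := congrFun hTu 0
  have e1 := congrFun hTu 1
  simp only [Matrix.mulVec, dotProduct, Fin.sum_univ_two, Matrix.map_apply, Pi.smul_apply,
    smul_eq_mul] at e0 e1
  have hu0 : u 0 ≠ 0 := by
    intro h
    have := (hind 1 0 (by simp [h])).1
    norm_num at this
  by_cases hq : ∃ q : ℚ, x = (q : K)
  · obtain ⟨q, rfl⟩ := hq
    have hqi : IsIntegral ℤ q := by
      have : (q : K) = algebraMap ℚ K q := by simp
      rw [this] at hx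
      exact (isIntegral_algebraMap_iff (algebraMap ℚ K).injective).1 hx
    obtain ⟨z, hz⟩ := IsIntegrallyClosed.isIntegral_iff.1 hqi
    have h0 := hind (T 0 0 - q) (T 0 1) (by push_cast; linear_combination e0)
    have h1 := hind (T 1 0) (T 1 1 - q) (by push_cast; linear_combination e1)
    have hz' : q = z := by rw [← hz]; simp
    have t00 : T 0 0 = z := by linarith [h0.1]
    have t11 : T 1 1 = z := by linarith [h1.2]
    refine ⟨⟨2 * z, ?_⟩, ⟨z * z, ?_⟩⟩
    · rw [Matrix.trace_fin_two, t00, t11]; push_cast; ring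
    · rw [Matrix.det_fin_two, t00, t11, h0.2, h1.1]; push_cast; ring
  · have hchar : Polynomial.aeval x T.charpoly = 0 := by
      rw [Matrix.charpoly_fin_two]
      simp only [map_add, map_sub, map_mul, map_pow, aeval_X, aeval_C, eq_ratCast,
        Matrix.trace_fin_two, Matrix.det_fin_two]
      push_cast
      have : (x^2 - ((T 0 0 : K) + T 1 1) * x + ((T 0 0 : K) * T 1 1 - T 0 1 * T 1 0)) * u 0 = 0 := by
        linear_combination ((T 1 1 : K) - x) * e0 - (T 0 1 : K) * e1
      exact (mul_eq_zero.1 this).resolve_right hu0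
    have hxQ : IsIntegral ℚ x := hx.tower_top
    have hdeg : 2 ≤ (minpoly ℚ x).natDegree := by
      rw [minpoly.two_le_natDegree_iff hxQ]
      rintro ⟨q, hq'⟩
      exact hq ⟨q, by rw [← hq']; simp⟩
    have hmp : T.charpoly = minpoly ℚ x := by
      refine Polynomial.eq_of_monic_of_dvd_of_natDegree_le (minpoly.monic hxQ) T.charpoly_monic
        (minpoly.dvd ℚ x hchar) ?_
      rw [Matrix.charpoly_natDegree_eq_dim]
      simpa using hdeg
    have hz := minpoly.isIntegrallyClosed_eq_field_fractions' ℚ hx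
    rw [hz] at hmp
    rw [Matrix.charpoly_fin_two] at hmp
    have c0 := congrArg (fun P => Polynomial.coeff P 0) hmp
    have c1 := congrArg (fun P => Polynomial.coeff P 1) hmp
    simp [Polynomial.coeff_X, Polynomial.coeff_C] at c0 c1
    exact ⟨⟨-(minpoly ℤ x).coeff 1, by push_cast; linarith⟩, ⟨_, c0⟩⟩

lemma aux_main (A : Matrix (Fin 2) (Fin 2) ℤ)
    (K : Type) [Field K] [NumberField K] (lam : K)
    (hint : IsIntegral ℤ lam) (u : Fin 2 → K)
    (hind : ∀ r s : ℚ, (r : K) * u 0 + (s : K) * u 1 = 0 → r = 0 ∧ s = 0)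
    (hAu : ((Aq A).map (Rat.cast : ℚ → K)) *ᵥ u = lam • u) (N : ℕ) :
    0 < N → (∀ p : ℕ, p.Prime → p ∣ N → (p : ℤ) ∣ A.det) →
    ∀ (T : Matrix (Fin 2) (Fin 2) ℚ) (x : K),
    (T.map (Rat.cast : ℚ → K)) *ᵥ u = x • u → IsIntegral ℤ x →
    ∀ S : Matrix (Fin 2) (Fin 2) ℤ, S.map (Int.cast : ℤ → ℚ) = (N : ℚ) • T →
    ∃ (m : ℕ) (S' : Matrix (Fin 2) (Fin 2) ℤ), S'.map (Int.cast : ℤ → ℚ) = Aq A ^ m * T := by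
  induction N using Nat.strong_induction_on with
  | _ N ih =>
  intro hN hpN T x hTu hx S hS
  by_cases h1 : N = 1
  · subst h1
    exact ⟨0, S, by simpa using hS⟩
  obtain ⟨p, hp, n, rfl⟩ := Nat.exists_prime_and_dvd h1
  have hn : 0 < n := Nat.pos_of_mul_pos_left hN |> fun _ => by
    rcases Nat.eq_zero_or_pos n with h | h
    · simp [h] at hN
    · exact h
  have hlt : n < p * n := by nlinarith [hp.two_le]
  have hpn : ∀ q : ℕ, q.Prime → q ∣ n → (q : ℤ) ∣ A.det :=
    fun q hq hqn => hpN q hq (hqn.mul_left p)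
  have hpd := hpN p hp (dvd_mul_right p n)
  have hp0 : (p : ℚ) ≠ 0 := by exact_mod_cast hp.ne_zero
  have hcomm : Aq A * T = T * Aq A := by
    apply aux_eq u hind
    rw [aux_map_mulQ, aux_map_mulQ, ← Matrix.mulVec_mulVec, ← Matrix.mulVec_mulVec, hTu, hAu,
      Matrix.mulVec_smul, Matrix.mulVec_smul, hTu, hAu, smul_smul, smul_smul, mul_comm]
  by_cases ht : (p : ℤ) ∣ A.trace
  · -- `A ^ 2` is divisible by `p`
    obtain ⟨B, hB⟩ : ∃ B : Matrix (Fin 2) (Fin 2) ℤ, A ^ 2 = (p : ℤ) • B := by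
      obtain ⟨t, ht⟩ := ht
      obtain ⟨d, hd⟩ := hpd
      refine ⟨Matrix.of fun i j => t * A i j - d * (1 : Matrix (Fin 2) (Fin 2) ℤ) i j, ?_⟩
      rw [Matrix.trace_fin_two] at ht
      rw [Matrix.det_fin_two] at hd
      ext i j
      fin_cases i <;> fin_cases j <;>
        simp [pow_two, Matrix.mul_apply, Fin.sum_univ_two]
      · linear_combination A 0 0 * ht - hd
      · linear_combination A 0 1 * ht
      · linear_combination A 1 0 * ht
      · linear_combination A 1 1 * ht - hd
    have hBq : Aq A ^ 2 = (p : ℚ) • B.map (Int.cast : ℤ → ℚ) := by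
      unfold Aq
      rw [← aux_map_pow, hB]
      ext i j; simp only [Matrix.map_apply, Matrix.smul_apply, smul_eq_mul, Int.cast_mul, Int.cast_natCast]
    obtain ⟨m, S', hS'⟩ := ih n hlt hn hpn (Aq A ^ 2 * T) (lam ^ 2 * x) (by
      rw [pow_two, aux_map_mulQ, aux_map_mulQ, ← Matrix.mulVec_mulVec, ← Matrix.mulVec_mulVec, hTu,
        Matrix.mulVec_smul, hAu, Matrix.mulVec_smul, Matrix.mulVec_smul, hAu, smul_smul, smul_smul]
      congr 1; ring) ((hint.pow 2).mul hx) (B * S) (by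
      rw [aux_map_mul, hS, hBq]
      simp only [Matrix.mul_smul, Matrix.smul_mul, smul_smul]
      push_cast
      rw [mul_comm])
    exact ⟨m + 2, S', by rw [hS', pow_add, mul_assoc]⟩
  · obtain ⟨⟨a, ha⟩, ⟨b, hb⟩⟩ := aux_int K u hind T x hTu hx
    have hSij : ∀ i j, (S i j : ℚ) = (p : ℚ) * n * T i j := by
      intro i j
      have := congrFun (congrFun hS i) j
      simpa using this
    have hdiv := aux_modp p hp A S (by
        apply aux_map_inj
        rw [aux_map_mul, aux_map_mul, hS]
        change Aq A * _ = _ * Aq A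
        rw [Matrix.mul_smul, Matrix.smul_mul, hcomm]) hpd ht
      ⟨n * a, by
        rw [Matrix.trace_fin_two] at ha ⊢
        have : ((S 0 0 + S 1 1 : ℤ) : ℚ) = ((p * (n * a) : ℤ) : ℚ) := by
          push_cast; rw [hSij, hSij, ← ha]; ring
        exact_mod_cast this⟩
      ⟨n * (p * n) * b, by
        rw [Matrix.det_fin_two] at hb ⊢
        have : ((S 0 0 * S 1 1 - S 0 1 * S 1 0 : ℤ) : ℚ) = ((p * (n * (p * n) * b) : ℤ) : ℚ) := by
          push_cast; simp only [hSij]; rw [← hb]; ring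
        exact_mod_cast this⟩
    choose R hR using hdiv
    exact ih n hlt hn hpn T x hTu hx (Matrix.of R) (by
      ext i j
      have h := hSij i j
      rw [hR] at h
      push_cast at h
      simp only [Matrix.map_apply, Matrix.of_apply, Matrix.smul_apply, smul_eq_mul]
      apply mul_left_cancel₀ hp0
      rw [h]; ring)

/-- 2-dimensional irreducible case: `T ∈ End(G_A)` iff `T` has entries in
`ℤ[1/det A]` and its eigenvalue `x` at `u` satisfies `λ^k x ∈ O_K` for some `k`. -/
theorem stmt12 (A : Matrix (Fin 2) (Fin 2) ℤ) (hA : A.det ≠ 0)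
    (hirr : Irreducible (A.charpoly.map (Int.castRingHom ℚ)))
    (hP' : (Pbad A).Nonempty)
    (K : Type) [Field K] [NumberField K] (lam : K)
    (hint : IsIntegral ℤ lam)
    (hroot : Polynomial.aeval lam (A.charpoly.map (Int.castRingHom ℚ)) = 0)
    (hgenK : Algebra.adjoin ℚ ({lam} : Set K) = ⊤)
    (u : Fin 2 → K) (hu : u ≠ 0)
    (hAu : (A.map (Int.cast : ℤ → K)) *ᵥ u = lam • u)
    (T : Matrix (Fin 2) (Fin 2) ℚ) (x : K)
    (hTu : (T.map (Rat.cast : ℚ → K)) *ᵥ u = x • u) :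
    (∀ v ∈ GA A, T *ᵥ v ∈ GA A) ↔
      ((∀ i j, T i j ∈ Rdet A) ∧ ∃ k : ℕ, IsIntegral ℤ (lam ^ k * x)) := by
  have hind := aux_indep A hirr K lam hroot u hu hAu
  have hAqu : ((Aq A).map (Rat.cast : ℚ → K)) *ᵥ u = lam • u := by
    rw [← hAu]
    congr 1
    ext i j; simp [Aq]
  have hcomm : Aq A * T = T * Aq A := by
    apply aux_eq u hind
    rw [aux_map_mulQ, aux_map_mulQ, ← Matrix.mulVec_mulVec, ← Matrix.mulVec_mulVec, hTu, hAqu,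
      Matrix.mulVec_smul, Matrix.mulVec_smul, hTu, hAqu, smul_smul, smul_smul, mul_comm]
  have hdet : (Aq A).det = (A.det : ℚ) := by
    rw [Matrix.det_fin_two, Matrix.det_fin_two]; simp [Aq]
  have hdq : (A.det : ℚ) ≠ 0 := by exact_mod_cast hA
  have hunit : IsUnit (Aq A).det := by rw [hdet]; exact hdq.isUnit
  have hpowu : ∀ m : ℕ, ((Aq A ^ m * T).map (Rat.cast : ℚ → K)) *ᵥ u = (lam ^ m * x) • u := by
    intro m
    induction m with
    | zero => simpa using hTu
    | succ m ihm =>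
      rw [pow_succ', mul_assoc, aux_map_mulQ, ← Matrix.mulVec_mulVec, ihm, Matrix.mulVec_smul, hAqu,
        smul_smul]
      congr 1; ring
  constructor
  · intro H
    have hcol : ∀ j : Fin 2, ∃ m₀ : ℕ, ∀ m, m₀ ≤ m → ∃ y : Fin 2 → ℤ,
        (Aq A ^ m) *ᵥ (T *ᵥ fun i => (((Pi.single j 1 : Fin 2 → ℤ) i : ℤ) : ℚ)) =
          fun i => (y i : ℚ) := by
      intro j
      obtain ⟨k, y, hy⟩ := H _ ⟨0, Pi.single j 1, by rw [zpow_zero, Matrix.one_mulVec]⟩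
      refine ⟨(-k).toNat, fun m hm => ?_⟩
      have hmk : 0 ≤ (m : ℤ) + k := by omega
      refine ⟨(A ^ ((m : ℤ) + k).toNat) *ᵥ y, ?_⟩
      rw [hy, Matrix.mulVec_mulVec, ← zpow_natCast, ← Matrix.zpow_add hunit,
        ← Int.toNat_of_nonneg hmk, zpow_natCast]
      unfold Aq
      rw [← aux_map_pow, Int.toNat_natCast]
      ext i
      simp [Matrix.mulVec, dotProduct]
    obtain ⟨m0, h0⟩ := hcol 0
    obtain ⟨m1, h1⟩ := hcol 1
    obtain ⟨y0, hy0⟩ := h0 (max m0 m1) (le_max_left _ _)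
    obtain ⟨y1, hy1⟩ := h1 (max m0 m1) (le_max_right _ _)
    generalize max m0 m1 = m at *
    obtain ⟨S, hS⟩ : ∃ S : Matrix (Fin 2) (Fin 2) ℤ, S.map (Int.cast : ℤ → ℚ) = Aq A ^ m * T := by
      refine ⟨Matrix.of fun i j => if j = 0 then y0 i else y1 i, ?_⟩
      rw [Matrix.mulVec_mulVec] at hy0 hy1
      ext i j
      have e0 := congrFun hy0 i
      have e1 := congrFun hy1 i
      simp only [Matrix.mulVec, dotProduct, Fin.sum_univ_two] at e0 e1
      fin_cases j
      · simpa using e0.symm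
      · simpa using e1.symm
    constructor
    · intro i j
      refine ⟨(A.adjugate ^ m * S) i j, m, ?_⟩
      have hadj : (A.adjugate).map (Int.cast : ℤ → ℚ) * Aq A = (A.det : ℚ) • 1 := by
        unfold Aq
        rw [← aux_map_mul, Matrix.adjugate_mul]
        ext i j
        simp only [Matrix.map_apply, Matrix.smul_apply, smul_eq_mul, Int.cast_mul, Matrix.one_apply]
        split_ifs <;> simp only [Int.cast_one, Int.cast_zero]
      have hc : Commute ((A.adjugate).map (Int.cast : ℤ → ℚ)) (Aq A) := by
        unfold Aq
        change _ * _ = _ * _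
        rw [← aux_map_mul, ← aux_map_mul, Matrix.adjugate_mul, Matrix.mul_adjugate]
      have : (A.adjugate ^ m * S).map (Int.cast : ℤ → ℚ) = (A.det : ℚ)^m • T := by
        rw [aux_map_mul, aux_map_pow, hS, ← mul_assoc, ← hc.mul_pow, hadj, _root_.smul_pow, one_pow,
          Matrix.smul_mul, one_mul]
      have e := congrFun (congrFun this i) j
      simp only [Matrix.map_apply, Matrix.smul_apply, smul_eq_mul] at e
      rw [e]
      field_simp
    · refine ⟨m, S.charpoly, S.charpoly_monic, ?_⟩
      have hu0 : u 0 ≠ 0 := by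
        intro h
        have := (hind 1 0 (by simp [h])).1
        norm_num at this
      have e := hpowu m
      rw [← hS] at e
      have e0 := congrFun e 0
      have e1 := congrFun e 1
      simp only [Matrix.mulVec, dotProduct, Fin.sum_univ_two, Matrix.map_apply, Pi.smul_apply,
        smul_eq_mul, Rat.cast_intCast] at e0 e1
      generalize lam ^ m * x = z at *
      rw [Matrix.charpoly_fin_two]
      simp only [eval₂_add, eval₂_sub, eval₂_mul, eval₂_pow, eval₂_X, eval₂_C]
      simp only [Matrix.trace_fin_two, Matrix.det_fin_two, eq_intCast]
      push_cast
      apply (mul_eq_zero.1 (?_ : _ * u 0 = 0)).resolve_right hu0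
      linear_combination ((S 1 1 : K) - z) * e0 - (S 0 1 : K) * e1
  · rintro ⟨hT, k, hk⟩
    obtain ⟨L, S, hS⟩ : ∃ (L : ℕ) (S : Matrix (Fin 2) (Fin 2) ℤ),
        S.map (Int.cast : ℤ → ℚ) = ((A.det.natAbs ^ L : ℕ) : ℚ) • T := by
      choose a l hal using hT
      have hl : ∀ i j, l i j ≤ l 0 0 + l 0 1 + l 1 0 + l 1 1 := by
        intro i j
        fin_cases i <;> fin_cases j <;> simp <;> omega
      refine ⟨2 * (l 0 0 + l 0 1 + l 1 0 + l 1 1), Matrix.of fun i j =>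
        a i j * A.det ^ (2 * (l 0 0 + l 0 1 + l 1 0 + l 1 1) - l i j), ?_⟩
      have habs : ((A.det.natAbs : ℕ) : ℚ) ^ 2 = (A.det : ℚ) ^ 2 := by
        have h := congrArg (Int.cast : ℤ → ℚ) (Int.natAbs_sq A.det)
        simpa only [Int.cast_pow, Int.cast_natCast] using h
      ext i j
      have := hl i j
      generalize l 0 0 + l 0 1 + l 1 0 + l 1 1 = M at *
      simp only [Matrix.map_apply, Matrix.of_apply, Matrix.smul_apply, smul_eq_mul]
      rw [Int.cast_mul, Int.cast_pow, Nat.cast_pow, hal i j]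
      have h2 : (A.det.natAbs : ℚ) ^ (2 * M) = (A.det : ℚ) ^ (2 * M - l i j) * (A.det : ℚ) ^ (l i j) := by
        rw [← pow_add, Nat.sub_add_cancel (by omega), pow_mul, pow_mul, habs]
      rw [h2]
      field_simp
    obtain ⟨m, S', hS'⟩ := aux_main A K lam hint u hind hAqu (A.det.natAbs ^ L)
      (pow_pos (Int.natAbs_pos.2 hA) L)
      (fun p hp hpd => Int.natCast_dvd.2 (hp.dvd_of_dvd_pow hpd))
      (Aq A ^ k * T) (lam ^ k * x) (hpowu k) hk (A ^ k * S) (by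
        rw [aux_map_mul, aux_map_pow, hS, Matrix.mul_smul]; rfl)
    rw [← mul_assoc, ← pow_add] at hS'
    generalize m + k = n at *
    rintro v ⟨e, y, rfl⟩
    refine ⟨e - n, S' *ᵥ y, ?_⟩
    have hcz : Aq A ^ e * T = T * Aq A ^ e :=
      (Matrix.Commute.zpow_left (show Commute (Aq A) T from hcomm) e)
    have hy : (fun i => (((S' *ᵥ y) i : ℤ) : ℚ)) =
        (S'.map (Int.cast : ℤ → ℚ)) *ᵥ fun i => (y i : ℚ) := by
      ext i
      simp [Matrix.mulVec, dotProduct]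
    rw [hy, hS', Matrix.mulVec_mulVec, Matrix.mulVec_mulVec, ← hcz, ← mul_assoc, ← zpow_natCast,
      ← Matrix.zpow_add hunit, sub_add_cancel]
end
end

section
/- Let A ∈ M_n(ℤ) be non-singular with h_A irreducible over ℚ and P'(A) ≠ ∅, and assume there exists a prime p with gcd(n, t_p) = 1. Define N⃗(X_A) = {T ∈ M_n(ℤ) : det T = ±1 and for every m ∈ ℕ there exists k ∈ ℕ with A^{-m}·T·A^{k} ∈ M_n(ℤ) (products computed in M_n(ℚ))}. Then N⃗(X_A) equals the centralizer of A in GL_n(ℤ), i.e., N⃗(X_A) = {T ∈ M_n(ℤ) : det T = ±1 and T·A = A·T}. In particular, N⃗(X_A) is a group under matrix multiplication, it is commutative and finitely generated, and if n = 2 and h_A has no real roots then N⃗(X_A) is finite. -/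
open Matrix Polynomial

noncomputable section

/-- Membership in the linear representation group `N⃗(X_A)`:
`det T = ±1` and for every `m` there is a `k` with `A⁻ᵐ T Aᵏ ∈ M_n(ℤ)`. -/
def Ncond {n : ℕ} (A T : Matrix (Fin n) (Fin n) ℤ) : Prop :=
  (T.det = 1 ∨ T.det = -1) ∧
    ∀ m : ℕ, ∃ k : ℕ, ∀ i j, ∃ z : ℤ,
      (((Aq A)⁻¹ ^ m * T.map (Int.cast : ℤ → ℚ) * (Aq A) ^ k) i j) = (z : ℚ)

open Finset in
/-- equal classes counting -/
lemma aux_dvd {α : Type*} [DecidableEq α] (s U : Finset α) (W : α → Finset α) (d : ℕ)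
    (hd : ∀ i ∈ s, (W i).card = d) (hself : ∀ i ∈ s, i ∈ W i) 
    (hsub : ∀ i ∈ s, W i ⊆ s)
    (htrans : ∀ i ∈ s, ∀ j ∈ W i, W j ⊆ W i)
    (hU : U ⊆ s) (hcl : ∀ i ∈ U, W i ⊆ U) : d ∣ U.card := by
  have hW : ∀ i ∈ s, ∀ j ∈ W i, W j = W i := fun i hi j hj =>
    Finset.eq_of_subset_of_card_le (htrans i hi j hj) (by rw [hd i hi, hd j (hsub i hi hj)])
  rw [Finset.card_eq_sum_card_image W U]
  apply Finset.dvd_sum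
  intro w hw
  obtain ⟨i, hi, rfl⟩ := Finset.mem_image.1 hw
  have : U.filter (fun j => W j = W i) = W i := by
    ext j
    simp only [Finset.mem_filter]
    constructor
    · rintro ⟨hj, h⟩
      rw [← h]; exact hself j (hU hj)
    · intro hj
      exact ⟨hcl i hi hj, hW i (hU hi) j hj⟩
  rw [this, hd i (hU hi)]

/-- combinatorial core -/
lemma aux_comb {R : Type*} [CommRing R] [DecidableEq R] (s : Finset R) (n t : ℕ)
    (hstab : ∀ σ : R ≃+* R, ∀ x ∈ s, σ x ∈ s)
    (htr : ∀ x ∈ s, ∀ y ∈ s, ∃ σ : R ≃+* R, σ x = y)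
    (P : Ideal R) (hP : P.IsMaximal)
    (hn : s.card = n) (ht : ∀ [DecidablePred (· ∈ P)], (s.filter (· ∈ P)).card = t) 
    (hcop : Nat.gcd n t = 1)
    (x y : R) (hx : x ∈ s) (hy : y ∈ s) (hxy : x ≠ y) :
    ∃ Q : Ideal R, Q.IsMaximal ∧ y ∈ Q ∧ x ∉ Q := by
  classical
  by_contra hcon
  push Not at hcon
  let W : R → Finset R := fun i => s.filter (fun j => ∀ Q : Ideal R, Q.IsMaximal → j ∈ Q → i ∈ Q)
  have hWmem : ∀ i j, j ∈ W i ↔ j ∈ s ∧ ∀ Q : Ideal R, Q.IsMaximal → j ∈ Q → i ∈ Q := by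
    intro i j; simp [W]
  have hle : ∀ i ∈ s, ∀ j ∈ s, (W i).card ≤ (W j).card := by
    intro i hi j hj
    obtain ⟨σ, hσ⟩ := htr i hi j hj
    apply Finset.card_le_card_of_injOn σ
    · intro k hk
      have hk' := (hWmem i k).1 hk
      refine (hWmem j (σ k)).2 ⟨hstab σ k hk'.1, ?_⟩
      intro Q hQ hkQ
      have := hk'.2 (Q.comap σ) (Ideal.comap_isMaximal_of_equiv σ) (by simpa [Ideal.mem_comap] using hkQ)
      rw [← hσ]
      simpa [Ideal.mem_comap] using this
    · exact σ.injective.injOn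
  have key := aux_dvd s (d := (W x).card) (W := W) (hd := fun i hi => le_antisymm (hle i hi x hx) (hle x hx i hi))
    (hself := fun i hi => (hWmem i i).2 ⟨hi, fun _ _ h => h⟩)
    (hsub := fun i _ => Finset.filter_subset _ _)
    (htrans := fun i hi j hj k hk => (hWmem i k).2 ⟨((hWmem j k).1 hk).1, fun Q hQ hkQ => 
      ((hWmem i j).1 hj).2 Q hQ (((hWmem j k).1 hk).2 Q hQ hkQ)⟩)
  have h1 := key s (Finset.Subset.refl _) (fun i _ => Finset.filter_subset _ _)
  have h2 := key (s.filter (· ∉ P)) (Finset.filter_subset _ _) (by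
    intro i hi j hj
    have hi' := Finset.mem_filter.1 hi
    have hj' := (hWmem i j).1 hj
    exact Finset.mem_filter.2 ⟨hj'.1, fun h => hi'.2 (hj'.2 P hP h)⟩)
  have h3 := Finset.card_filter_add_card_filter_not (s := s) (· ∈ P)
  rw [ht, hn] at h3
  rw [hn] at h1
  have h4 : (W x).card ∣ t := by
    rw [← h3] at h1
    exact (Nat.dvd_add_left h2).1 h1
  have h5 : (W x).card ∣ 1 := hcop ▸ Nat.dvd_gcd h1 h4
  have h6 : (W x).card = 1 := Nat.dvd_one.1 h5
  have hxW : x ∈ W x := (hWmem x x).2 ⟨hx, fun _ _ h => h⟩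
  have hyW : y ∈ W x := (hWmem x y).2 ⟨hy, fun Q hQ h => hcon Q hQ h⟩
  exact hxy (Finset.card_le_one.1 h6.le x hxW y hyW)

def qpol {R : Type*} [CommRing R] [DecidableEq R] (s : Finset R) (l : R) : R[X] :=
  ∏ ν ∈ s.erase l, (X - C ν)

lemma aux_lagrange {R : Type*} [CommRing R] [IsDomain R] [DecidableEq R] (s : Finset R)
    (hs : s.Nonempty) : ∃ c : R → FractionRing R,
      ∑ l ∈ s, C (c l) * (qpol s l).map (algebraMap R (FractionRing R)) = 1 := by
  refine ⟨fun l => ∏ j ∈ s.erase l, (algebraMap R (FractionRing R) l - algebraMap R (FractionRing R) j)⁻¹, ?_⟩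
  rw [← Lagrange.sum_basis (s := s) (v := algebraMap R (FractionRing R))
    ((IsFractionRing.injective R (FractionRing R)).injOn) hs]
  apply Finset.sum_congr rfl
  intro l hl
  simp only [qpol, Lagrange.basis, Lagrange.basisDivisor, Polynomial.map_prod, Finset.prod_mul_distrib, map_prod, Polynomial.map_sub, map_X, map_C]

lemma aux_A {R : Type*} [CommRing R] [DecidableEq R] {n : ℕ} (A : Matrix (Fin n) (Fin n) R)
    (s : Finset R) (hs : A.charpoly = ∏ l ∈ s, (X - C l)) (l : R) (hl : l ∈ s) :
    A * aeval A (qpol s l) = l • aeval A (qpol s l) ∧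
    aeval A (qpol s l) * A = l • aeval A (qpol s l) := by
  have h : aeval A ((X - C l) * qpol s l) = 0 := by
    rw [qpol, Finset.mul_prod_erase s (fun ν => X - C ν) hl, ← hs]
    exact Matrix.aeval_self_charpoly A
  have h2 := h
  rw [mul_comm] at h2
  rw [map_mul] at h h2
  simp only [map_sub, aeval_X, aeval_C, sub_mul, mul_sub, sub_eq_zero] at h h2
  constructor
  · rw [h, Algebra.smul_def]
  · rw [h2, Algebra.smul_def, Algebra.commutes]

lemma aux_powA {R : Type*} [CommRing R] [DecidableEq R] {n : ℕ} (A : Matrix (Fin n) (Fin n) R)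
    (s : Finset R) (hs : A.charpoly = ∏ l ∈ s, (X - C l)) (l : R) (hl : l ∈ s) (k : ℕ) :
    A ^ k * aeval A (qpol s l) = l ^ k • aeval A (qpol s l) ∧
    aeval A (qpol s l) * A ^ k = l ^ k • aeval A (qpol s l) := by
  obtain ⟨h1, h2⟩ := aux_A A s hs l hl
  induction k with
  | zero => simp
  | succ k ih =>
    constructor
    · rw [pow_succ, mul_assoc, h1, mul_smul_comm, ih.1, smul_smul, pow_succ, mul_comm]
    · rw [pow_succ', ← mul_assoc, h2, smul_mul_assoc, ih.2, smul_smul, pow_succ']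

lemma aux_zero {R : Type*} [CommRing R] [IsDomain R] [DecidableEq R] {n : ℕ}
    (A Z : Matrix (Fin n) (Fin n) R) (s : Finset R) (hs : s.Nonempty)
    (h : ∀ l ∈ s, ∀ m ∈ s, aeval A (qpol s m) * Z * aeval A (qpol s l) = 0) : Z = 0 := by
  obtain ⟨c, hc⟩ := aux_lagrange s hs
  let K := FractionRing R
  let f := (algebraMap R K).mapMatrix (m := Fin n)
  have hinj : Function.Injective f := by
    intro a b hab
    exact Matrix.map_injective (IsFractionRing.injective R K) hab
  apply hinj
  rw [map_zero]
  have hmap : ∀ q : R[X], aeval (f A) (q.map (algebraMap R K)) = f (aeval A q) := by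
    intro q
    induction q using Polynomial.induction_on' with
    | add p q hp hq => simp [hp, hq]
    | monomial k a =>
      simp only [map_monomial, aeval_monomial, map_mul, map_pow]
      congr 1
      ext i j
      by_cases hij : i = j <;> simp [f, Matrix.algebraMap_matrix_apply, hij]
  have h1 : ∑ l ∈ s, c l • f (aeval A (qpol s l)) = 1 := by
    have := congrArg (aeval (f A)) hc
    rw [map_sum, map_one] at this
    rw [← this]
    refine Finset.sum_congr rfl fun l _ => ?_
    rw [map_mul, hmap, aeval_C, ← Algebra.smul_def]
  calc f Z = (∑ l ∈ s, c l • f (aeval A (qpol s l))) * f Z * (∑ l ∈ s, c l • f (aeval A (qpol s l))) := by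
        rw [h1]; simp
    _ = 0 := by
      rw [Finset.sum_mul, Finset.sum_mul]
      apply Finset.sum_eq_zero
      intro m hm
      rw [Finset.mul_sum]
      apply Finset.sum_eq_zero
      intro l hl
      rw [smul_mul_assoc, smul_mul_assoc, mul_smul_comm, ← map_mul, ← map_mul, h l hl m hm]
      simp

lemma aux_core {R : Type*} [CommRing R] [IsDomain R] [IsNoetherianRing R] [DecidableEq R] {n : ℕ}
    (A T : Matrix (Fin n) (Fin n) R) (s : Finset R) (hs : s.Nonempty)
    (hsA : A.charpoly = ∏ l ∈ s, (X - C l))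
    (hT : ∀ m : ℕ, ∃ k : ℕ, ∃ B : Matrix (Fin n) (Fin n) R, T * A ^ k = A ^ m * B)
    (hsep : ∀ x ∈ s, ∀ y ∈ s, x ≠ y → ∃ Q : Ideal R, Q.IsMaximal ∧ y ∈ Q ∧ x ∉ Q) :
    T * A = A * T := by
  rw [← sub_eq_zero]
  apply aux_zero A _ s hs
  intro x hx y hy
  have e1 := aux_A A s hsA x hx
  have e2 := aux_A A s hsA y hy
  have : aeval A (qpol s y) * (T * A - A * T) * aeval A (qpol s x) =
      (x - y) • (aeval A (qpol s y) * T * aeval A (qpol s x)) := by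
    rw [mul_sub, sub_mul, ← mul_assoc, mul_assoc _ A, e1.1, ← mul_assoc, e2.2]
    simp [sub_smul]
  rw [this]
  by_cases hxy : x = y
  · simp [hxy]
  obtain ⟨Q, hQ, hyQ, hxQ⟩ := hsep x hx y hy hxy
  suffices aeval A (qpol s y) * T * aeval A (qpol s x) = 0 by rw [this, smul_zero]
  ext i j
  rw [Matrix.zero_apply, ← Ideal.mem_bot, ← Ideal.iInf_pow_eq_bot_of_isDomain Q hQ.ne_top, Ideal.mem_iInf]
  intro m
  obtain ⟨k, B, hB⟩ := hT m
  have h1 : x ^ k • (aeval A (qpol s y) * T * aeval A (qpol s x)) =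
      y ^ m • (aeval A (qpol s y) * B * aeval A (qpol s x)) := by
    rw [← mul_smul_comm, ← (aux_powA A s hsA x hx k).1, ← smul_mul_assoc, ← smul_mul_assoc,
      ← (aux_powA A s hsA y hy m).2]
    calc _ = aeval A (qpol s y) * (T * A ^ k) * aeval A (qpol s x) := by simp only [mul_assoc]
      _ = _ := by rw [hB]; simp only [mul_assoc]
  have h2 := congrFun (congrFun h1 i) j
  simp only [Matrix.smul_apply, smul_eq_mul] at h2
  have h3 : x ^ k * (aeval A (qpol s y) * T * aeval A (qpol s x)) i j ∈ Q ^ m := by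
    rw [h2]; exact Ideal.mul_mem_right _ _ (Ideal.pow_mem_pow hyQ m)
  exact (Ideal.IsMaximal.mul_mem_pow Q h3).resolve_left (fun h => hxQ (hQ.isPrime.mem_of_pow_mem k h))

lemma aux_ncond {n : ℕ} (A T : Matrix (Fin n) (Fin n) ℤ) (hA : A.det ≠ 0) (h : Ncond A T) :
    ∀ m : ℕ, ∃ k : ℕ, ∃ B : Matrix (Fin n) (Fin n) ℤ, T * A ^ k = A ^ m * B := by
  intro m
  obtain ⟨k, hk⟩ := h.2 m
  choose B hB using hk
  refine ⟨k, Matrix.of B, ?_⟩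
  have hu : IsUnit (Aq A).det := by
    have : (Aq A).det = (A.det : ℚ) := ((Int.castRingHom ℚ).map_det A).symm
    rw [this, isUnit_iff_ne_zero]; exact_mod_cast hA
  have hB' : (Aq A)⁻¹ ^ m * T.map (Int.cast : ℤ → ℚ) * (Aq A) ^ k = (Int.castRingHom ℚ).mapMatrix (Matrix.of B) := by
    ext i j; rw [hB]; simp
  have hinj : Function.Injective ((Int.castRingHom ℚ).mapMatrix (m := Fin n)) := by
    intro a b hab
    exact Matrix.map_injective Int.cast_injective hab
  apply hinj
  rw [map_mul, map_mul, ← hB', map_pow, map_pow]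
  change T.map Int.cast * (Aq A) ^ k = (Aq A) ^ m * _
  rw [mul_assoc, ← mul_assoc ((Aq A)^m), Matrix.inv_pow', Matrix.mul_nonsing_inv, one_mul]
  rw [Matrix.det_pow]; exact hu.pow m

lemma aux_ncond_conv {n : ℕ} (A T : Matrix (Fin n) (Fin n) ℤ) (hA : A.det ≠ 0)
    (h : (T.det = 1 ∨ T.det = -1) ∧ T * A = A * T) : Ncond A T := by
  refine ⟨h.1, fun m => ⟨m, fun i j => ⟨T i j, ?_⟩⟩⟩
  have hu : IsUnit (Aq A).det := by
    have : (Aq A).det = (A.det : ℚ) := ((Int.castRingHom ℚ).map_det A).symm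
    rw [this, isUnit_iff_ne_zero]; exact_mod_cast hA
  have hc : Commute (T.map (Int.cast : ℤ → ℚ)) (Aq A ^ m) := by
    apply Commute.pow_right
    exact (Commute.map (show Commute T A from h.2) ((Int.castRingHom ℚ).mapMatrix (m := Fin n)))
  rw [mul_assoc, hc.eq, ← mul_assoc, Matrix.inv_pow', Matrix.nonsing_inv_mul, one_mul]
  · rfl
  · rw [Matrix.det_pow]; exact hu.pow m
lemma aux_tp {R : Type*} [CommRing R] [IsDomain R] [DecidableEq R] (h : ℤ[X]) (s : Finset R)
    (hs : h.map (algebraMap ℤ R) = ∏ l ∈ s, (X - C l)) (p : ℕ) (hp : p.Prime)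
    (P : Ideal R) (hP : P.IsMaximal) (hpP : (p : R) ∈ P) [DecidablePred (· ∈ P)] :
    (s.filter (· ∈ P)).card = rootMultiplicity 0 (h.map (Int.castRingHom (ZMod p))) := by
  classical
  let _ : Field (R ⧸ P) := Ideal.Quotient.field P
  have : Fact p.Prime := ⟨hp⟩
  have : CharP (R ⧸ P) p := (CharP.charP_iff_prime_eq_zero hp).2 (by
    rw [← map_natCast (Ideal.Quotient.mk P)]
    exact Ideal.Quotient.eq_zero_iff_mem.2 hpP)
  let f : ZMod p →+* R ⧸ P := ZMod.castHom (dvd_refl p) (R ⧸ P)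
  have h1 : (h.map (Int.castRingHom (ZMod p))).map f = ∏ l ∈ s, (X - C (Ideal.Quotient.mk P l)) := by
    have : (h.map (algebraMap ℤ R)).map (Ideal.Quotient.mk P) = (h.map (Int.castRingHom (ZMod p))).map f := by
      rw [Polynomial.map_map, Polynomial.map_map]
      congr 1
      exact RingHom.ext_int _ _
    rw [← this, hs, Polynomial.map_prod]
    simp
  rw [Polynomial.eq_rootMultiplicity_map f.injective, h1, map_zero, ← Polynomial.count_roots]
  have h2 : (∏ l ∈ s, (X - C (Ideal.Quotient.mk P l))) =
      ((s.val.map (Ideal.Quotient.mk P)).map (fun a => X - C a)).prod := by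
    rw [Multiset.map_map]; rfl
  rw [h2, Polynomial.roots_multiset_prod_X_sub_C, Multiset.count_map, Finset.card_def, Finset.filter_val]
  congr 1
  apply Multiset.filter_congr
  intro x _
  rw [eq_comm, Ideal.Quotient.eq_zero_iff_mem]

lemma aux_main' (K : Type) [Field K] [NumberField K] [Normal ℚ K] {n : ℕ} (A : Matrix (Fin n) (Fin n) ℤ) (hA : A.det ≠ 0)
    (hirr : Irreducible (A.charpoly.map (Int.castRingHom ℚ)))
    (hsplit : ((A.charpoly.map (Int.castRingHom ℚ)).map (algebraMap ℚ K)).Splits)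
    (hcop : ∃ p : ℕ, p.Prime ∧ Nat.gcd n (tp A p) = 1)
    (T : Matrix (Fin n) (Fin n) ℤ) (hT : Ncond A T) : T * A = A * T := by
  classical
  obtain ⟨p, hp, hcop⟩ := hcop
  set h := A.charpoly with hh
  have hmon : h.Monic := A.charpoly_monic
  set hQ := h.map (Int.castRingHom ℚ) with hhQ
  have hQmon : hQ.Monic := hmon.map _
  let R := NumberField.RingOfIntegers K
  have hQK : hQ.map (algebraMap ℚ K) = h.map (algebraMap ℤ K) := by
    rw [hhQ, Polynomial.map_map]; congr 1; exact RingHom.ext_int _ _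
  have hinjR : Function.Injective (algebraMap R K) := NumberField.RingOfIntegers.coe_injective
  let sK : Finset K := (hQ.map (algebraMap ℚ K)).roots.toFinset
  have hnodup : (hQ.map (algebraMap ℚ K)).roots.Nodup :=
    nodup_roots (hirr.separable.map)
  have hprodK : h.map (algebraMap ℤ K) = ∏ a ∈ sK, (X - C a) := by
    rw [← hQK]
    conv_lhs => rw [hsplit.eq_prod_roots_of_monic (hQmon.map _)]
    rw [Finset.prod, Multiset.toFinset_val, hnodup.dedup]
  let s : Finset R := sK.preimage (algebraMap R K) hinjR.injOn
  have hmemK : ∀ a : K, a ∈ sK ↔ aeval a h = 0 := by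
    intro a
    rw [aeval_def, ← eval_map, ← hQK]
    simp only [sK, Multiset.mem_toFinset]
    rw [mem_roots (hQmon.map _).ne_zero]; rfl
  have hmem : ∀ a : R, a ∈ s ↔ aeval a h = 0 := by
    intro a
    rw [Finset.mem_preimage, hmemK, aeval_algebraMap_apply]
    exact map_eq_zero_iff _ hinjR
  have hprod : h.map (algebraMap ℤ R) = ∏ a ∈ s, (X - C a) := by
    apply Polynomial.map_injective _ hinjR
    rw [Polynomial.map_map, Polynomial.map_prod, ← IsScalarTower.algebraMap_eq, hprodK]
    simp only [Polynomial.map_sub, map_X, map_C]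
    symm
    apply Finset.prod_preimage (algebraMap R K) sK hinjR.injOn (fun a => X - C a)
    intro a ha hna
    exfalso; apply hna
    have : IsIntegral ℤ a := ⟨h, hmon, by have := (hmemK a).1 ha; rwa [aeval_def] at this⟩
    exact ⟨⟨a, this⟩, rfl⟩
  have hcard : s.card = n := by
    have := congrArg natDegree hprod
    rw [natDegree_prod_of_monic _ _ (fun a _ => monic_X_sub_C a), hmon.natDegree_map, hh, Matrix.charpoly_natDegree_eq_dim] at this
    simpa using this.symm
  have hn : n ≠ 0 := by
    rintro rfl
    apply hirr.not_isUnit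
    have : hQ = 1 := by simp [hhQ, hh, Matrix.charpoly]
    rw [this]; exact isUnit_one
  have hsne : s.Nonempty := by
    rw [← Finset.card_pos, hcard]; omega
  have hcharA : ((algebraMap ℤ R).mapMatrix A).charpoly = ∏ a ∈ s, (X - C a) := by
    rw [← hprod, hh, ← Matrix.charpoly_map]; rfl
  have hpint : ∃ P : Ideal R, P.IsMaximal ∧ (p : R) ∈ P := by
    have hm : (Ideal.span {(p : ℤ)}).IsMaximal :=
      PrincipalIdealRing.isMaximal_of_irreducible (Nat.prime_iff_prime_int.1 hp).irreducible
    obtain ⟨Q, hQm, hQ⟩ := Ideal.exists_ideal_over_maximal_of_isIntegral (S := R)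
      (Ideal.span {(p : ℤ)}) (by
        rw [(RingHom.injective_iff_ker_eq_bot _).1 (FaithfulSMul.algebraMap_injective ℤ R)]
        exact bot_le)
    refine ⟨Q, hQm, ?_⟩
    have : (p : ℤ) ∈ Q.comap (algebraMap ℤ R) := by
      rw [hQ]; exact Ideal.mem_span_singleton_self _
    simpa [Ideal.mem_comap] using this
  obtain ⟨P, hP, hpP⟩ := hpint
  have hminpoly : ∀ a : K, aeval a h = 0 → minpoly ℚ a = hQ := by
    intro a ha
    symm
    apply minpoly.eq_of_irreducible_of_monic hirr _ hQmon
    rw [aeval_def, ← eval_map, hQK, eval_map, ← aeval_def]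
    exact ha
  have key : ((algebraMap ℤ R).mapMatrix T) * ((algebraMap ℤ R).mapMatrix A) =
      ((algebraMap ℤ R).mapMatrix A) * ((algebraMap ℤ R).mapMatrix T) := by
    apply aux_core _ _ s hsne hcharA
    · intro m
      obtain ⟨k, B, hB⟩ := aux_ncond A T hA hT m
      refine ⟨k, (algebraMap ℤ R).mapMatrix B, ?_⟩
      rw [← map_pow, ← map_pow, ← map_mul, ← map_mul, hB]
    · intro x hx y hy hxy
      refine aux_comb s n (tp A p) ?_ ?_ P hP hcard ?_ hcop x y hx hy hxy
      · intro σ x hx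
        rw [hmem] at hx ⊢
        have := congrArg σ hx
        rw [map_zero] at this
        rw [← this]
        exact aeval_algHom_apply σ.toRingHom.toIntAlgHom x h
      · intro x hx y hy
        have hx' := (hmemK _).1 (Finset.mem_preimage.1 hx)
        have hy' := (hmemK _).1 (Finset.mem_preimage.1 hy)
        have : IsConjRoot ℚ (algebraMap R K x) (algebraMap R K y) := by
          rw [isConjRoot_def, hminpoly _ hx', hminpoly _ hy']
        obtain ⟨σ, hσ⟩ := this.symm.exists_algEquiv
        refine ⟨NumberField.RingOfIntegers.mapRingEquiv σ.toRingEquiv, ?_⟩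
        apply hinjR
        exact hσ
      · intro _
        exact aux_tp h s hprod p hp P hP hpP
  rw [← map_mul, ← map_mul] at key
  exact Matrix.map_injective (FaithfulSMul.algebraMap_injective ℤ R) key

lemma aux_nf (K : Type) [Field K] [CharZero K] [i : Algebra ℚ K] (h : ℚ[X])
    [IsSplittingField ℚ K h] : ∃ (_ : NumberField K),
      (@Normal ℚ K _ _ DivisionRing.toRatAlgebra) ∧
      (h.map (@algebraMap ℚ K _ _ DivisionRing.toRatAlgebra)).Splits := by
  obtain rfl : i = DivisionRing.toRatAlgebra := Subsingleton.elim _ _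
  have : FiniteDimensional ℚ K := IsSplittingField.finiteDimensional K h
  exact ⟨{ to_charZero := inferInstance, to_finiteDimensional := this },
    Normal.of_isSplittingField h, IsSplittingField.splits K h⟩

lemma aux_main_s18 {n : ℕ} (A : Matrix (Fin n) (Fin n) ℤ) (hA : A.det ≠ 0)
    (hirr : Irreducible (A.charpoly.map (Int.castRingHom ℚ)))
    (hcop : ∃ p : ℕ, p.Prime ∧ Nat.gcd n (tp A p) = 1)
    (T : Matrix (Fin n) (Fin n) ℤ) (hT : Ncond A T) : T * A = A * T := by
  obtain ⟨h1, h2, h3⟩ := @aux_nf (SplittingField (A.charpoly.map (Int.castRingHom ℚ)))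
    _ _ _ (A.charpoly.map (Int.castRingHom ℚ)) (IsSplittingField.splittingField _)
  exact aux_main' _ A hA hirr h3 hcop T hT

lemma aux_fg {G H : Type*} [CommGroup G] [Group H] (hG : Module.Finite ℤ (Additive G))
    (f : H →* G) (hf : Function.Injective f) : Group.FG H := by
  have e : H ≃* f.range := MonoidHom.ofInjective hf
  have h1 : (AddSubgroup.toIntSubmodule (Subgroup.toAddSubgroup f.range)).FG :=
    IsNoetherian.noetherian _
  rw [Submodule.fg_iff_addSubgroup_fg, AddSubgroup.toIntSubmodule_toAddSubgroup,
    ← Subgroup.fg_iff_add_fg] at h1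
  have h2 : Group.FG f.range := (Group.fg_iff_subgroup_fg _).2 h1
  exact Group.fg_of_surjective (f := e.symm.toMonoidHom) e.symm.surjective

/-- A matrix commuting with `A` (irreducible charpoly) is a polynomial in `A`. -/
lemma aux_cyclic {n : ℕ} (A T : Matrix (Fin n) (Fin n) ℚ) (hirr : Irreducible A.charpoly)
    (h : T * A = A * T) : ∃ q : ℚ[X], aeval A q = T := by
  have hn : n ≠ 0 := by
    rintro rfl
    apply hirr.not_isUnit
    have : A.charpoly = 1 := by simp [Matrix.charpoly]
    rw [this]; exact isUnit_one
  have : NeZero n := ⟨hn⟩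
  let v : Fin n → ℚ := Pi.single 0 1
  have hv : v ≠ 0 := by simp [v]
  let L : Polynomial.degreeLT ℚ n →ₗ[ℚ] (Fin n → ℚ) :=
    { toFun := fun q => (aeval A (q : ℚ[X])) *ᵥ v
      map_add' := by intro a b; simp [Matrix.add_mulVec]
      map_smul' := by intro a b; simp [Matrix.smul_mulVec] }
  have hL : ∀ q, L q = (aeval A (q : ℚ[X])) *ᵥ v := fun q => rfl
  have hinj : Function.Injective L := by
    rw [← LinearMap.ker_eq_bot, LinearMap.ker_eq_bot']
    intro q hq
    by_contra hq0
    have hq0' : (q : ℚ[X]) ≠ 0 := fun h => hq0 (Subtype.ext h)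
    have hdeg := Polynomial.mem_degreeLT.1 q.2
    have hnd : ¬ A.charpoly ∣ (q : ℚ[X]) := by
      intro hd
      have := Polynomial.degree_le_of_dvd hd hq0'
      rw [Matrix.charpoly_degree_eq_dim, Fintype.card_fin] at this
      exact absurd hdeg (not_lt.2 this)
    obtain ⟨a, b, hab⟩ := (hirr.coprime_iff_not_dvd).2 hnd
    have h1 := congrArg (aeval A) hab
    rw [map_add, map_mul, map_mul, Matrix.aeval_self_charpoly, mul_zero, zero_add, map_one] at h1
    apply hv
    rw [← Matrix.one_mulVec v, ← h1, ← Matrix.mulVec_mulVec, ← hL, hq, Matrix.mulVec_zero]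
  have hfin : Module.finrank ℚ (Polynomial.degreeLT ℚ n) = Module.finrank ℚ (Fin n → ℚ) :=
    (Polynomial.degreeLTEquiv ℚ n).finrank_eq
  have : FiniteDimensional ℚ (Polynomial.degreeLT ℚ n) :=
    (Polynomial.degreeLTEquiv ℚ n).symm.finiteDimensional
  have hsurj : Function.Surjective L :=
    (LinearMap.injective_iff_surjective_of_finrank_eq_finrank hfin).1 hinj
  obtain ⟨q, hq⟩ := hsurj (T *ᵥ v)
  refine ⟨q, ?_⟩
  rw [hL] at hq
  have hcT : ∀ r : ℚ[X], Commute T (aeval A r) := by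
    intro r
    have : aeval A r ∈ Algebra.adjoin ℚ {A} := by
      exact Polynomial.aeval_mem_adjoin_singleton ℚ A
    exact (Algebra.commute_of_mem_adjoin_singleton_of_commute this h)
  have hext : ∀ w : Fin n → ℚ, (aeval A (q : ℚ[X])) *ᵥ w = T *ᵥ w := by
    intro w
    obtain ⟨r, rfl⟩ := hsurj w
    rw [hL, Matrix.mulVec_mulVec, Matrix.mulVec_mulVec, ← map_mul, mul_comm, map_mul,
      ← Matrix.mulVec_mulVec, hq, Matrix.mulVec_mulVec, (hcT r).eq]
  exact Matrix.ext_of_mulVec_single (fun i => hext _)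

lemma aux_hom {n : ℕ} (A : Matrix (Fin n) (Fin n) ℤ) (F : Type) [Field F] [NumberField F]
    (ψ : F →+* Matrix (Fin n) (Fin n) ℚ) (hψ : Function.Injective ψ)
    (hr : ∀ T : Matrix (Fin n) (Fin n) ℤ, T * A = A * T →
      ∃ x, ψ x = (Int.castRingHom ℚ).mapMatrix T)
    (H : Subgroup (Matrix (Fin n) (Fin n) ℤ)ˣ)
    (hH : ∀ T ∈ H, (T : Matrix (Fin n) (Fin n) ℤ) * A = A * T) :
    ∃ f : H →* (NumberField.RingOfIntegers F)ˣ, Function.Injective f := by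
  have hint : ∀ T : Matrix (Fin n) (Fin n) ℤ, T * A = A * T →
      ∃ x : NumberField.RingOfIntegers F, ψ (x : F) = (Int.castRingHom ℚ).mapMatrix T := by
    intro T hT
    obtain ⟨x, hx⟩ := hr T hT
    have h1 : IsIntegral ℤ ((Int.castRingHom ℚ).mapMatrix T) :=
      (Matrix.isIntegral T).map ((Int.castRingHom ℚ).mapMatrix (m := Fin n)).toIntAlgHom
    rw [← hx] at h1
    have h2 : IsIntegral ℤ x := (isIntegral_algHom_iff ψ.toIntAlgHom hψ).1 h1
    exact ⟨⟨x, h2⟩, hx⟩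
  have hinjM : Function.Injective ((Int.castRingHom ℚ).mapMatrix (m := Fin n)) := by
    intro a b hab
    exact Matrix.map_injective Int.cast_injective hab
  let φ : NumberField.RingOfIntegers F →+* Matrix (Fin n) (Fin n) ℚ :=
    ψ.comp (algebraMap (NumberField.RingOfIntegers F) F)
  have hφ : Function.Injective φ := hψ.comp NumberField.RingOfIntegers.coe_injective
  let Φ := Units.map φ.toMonoidHom
  have hΦ : Function.Injective Φ := Units.map_injective hφ
  let ι : H →* (Matrix (Fin n) (Fin n) ℚ)ˣ :=
    (Units.map ((Int.castRingHom ℚ).mapMatrix (m := Fin n)).toMonoidHom).comp H.subtype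
  have hι : Function.Injective ι := (Units.map_injective hinjM).comp H.subtype_injective
  have hmem : ∀ T : H, ι T ∈ Φ.range := by
    intro T
    obtain ⟨x, hx⟩ := hint _ (hH T T.2)
    obtain ⟨y, hy⟩ := hint _ (hH _ (T⁻¹).2)
    have hxy : x * y = 1 := by
      apply hφ
      rw [map_mul, map_one]
      change ψ x * ψ y = 1
      rw [hx, hy, ← map_mul, ← Units.val_mul, ← Subgroup.coe_mul, mul_inv_cancel]
      simp
    refine ⟨⟨x, y, hxy, by rw [mul_comm, hxy]⟩, ?_⟩
    ext1
    exact hx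
  refine ⟨(MonoidHom.ofInjective hΦ).symm.toMonoidHom.comp (ι.codRestrict Φ.range hmem), ?_⟩
  apply (MonoidHom.ofInjective hΦ).symm.injective.comp
  intro a b hab
  exact hι (congrArg Subtype.val hab)

lemma aux_finite_units (F : Type) [Field F] [NumberField F] (h2 : Module.finrank ℚ F = 2)
    (hreal : ∀ _ : F →+* ℝ, False) : Finite (NumberField.RingOfIntegers F)ˣ := by
  have hr : NumberField.InfinitePlace.nrRealPlaces F = 0 := by
    classical
    rw [NumberField.InfinitePlace.nrRealPlaces, Fintype.card_eq_zero_iff]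
    exact ⟨fun w => hreal (NumberField.InfinitePlace.embedding_of_isReal w.2)⟩
  have h1 := NumberField.InfinitePlace.card_add_two_mul_card_eq_rank F
  have h3 := NumberField.InfinitePlace.card_eq_nrRealPlaces_add_nrComplexPlaces F
  have hrank : NumberField.Units.rank F = 0 := by
    rw [NumberField.Units.rank]; omega
  have : IsEmpty (Fin (NumberField.Units.rank F)) := by rw [hrank]; infer_instance
  apply Finite.of_surjective (Subtype.val : NumberField.Units.torsion F → _)
  intro x
  obtain ⟨⟨z, e⟩, hz, -⟩ := NumberField.Units.exist_unique_eq_mul_prod F x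
  refine ⟨z, ?_⟩
  rw [hz]; simp

lemma aux_nf2 (K : Type) [Field K] [CharZero K] [i : Algebra ℚ K] (hf : FiniteDimensional ℚ K)
    {d : ℕ} (h : Module.finrank ℚ K = d) : ∃ (_ : NumberField K), Module.finrank ℚ K = d := by
  obtain rfl : i = DivisionRing.toRatAlgebra := Subsingleton.elim _ _
  exact ⟨{ to_charZero := inferInstance, to_finiteDimensional := hf }, h⟩

lemma aux_group {n : ℕ} (A : Matrix (Fin n) (Fin n) ℤ)
    (hirr : Irreducible (A.charpoly.map (Int.castRingHom ℚ)))
    (H : Subgroup (Matrix (Fin n) (Fin n) ℤ)ˣ)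
    (hH : ∀ T ∈ H, (T : Matrix (Fin n) (Fin n) ℤ) * A = A * T) :
    (∀ a b : H, a * b = b * a) ∧ Group.FG H ∧
        (n = 2 → (∀ r : ℝ, ¬ (A.charpoly.map (Int.castRingHom ℝ)).IsRoot r) → Finite H) := by
  let AQ := (Int.castRingHom ℚ).mapMatrix A
  have hchar : AQ.charpoly = A.charpoly.map (Int.castRingHom ℚ) := Matrix.charpoly_map _ _
  rw [← hchar] at hirr
  have : Fact (Irreducible AQ.charpoly) := ⟨hirr⟩
  have hmon : AQ.charpoly.Monic := AQ.charpoly_monic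
  have hn : n ≠ 0 := by
    rintro rfl
    apply hirr.not_isUnit
    have : AQ.charpoly = 1 := by simp [Matrix.charpoly]
    rw [this]; exact isUnit_one
  have : NeZero n := ⟨hn⟩
  let ψ : AdjoinRoot AQ.charpoly →+* Matrix (Fin n) (Fin n) ℚ :=
    Ideal.Quotient.lift (Ideal.span {AQ.charpoly}) (aeval AQ).toRingHom (by
      intro a ha
      obtain ⟨b, rfl⟩ := Ideal.mem_span_singleton.1 ha
      change aeval AQ (AQ.charpoly * b) = 0
      rw [map_mul, Matrix.aeval_self_charpoly, zero_mul])
  have hψm : ∀ q, ψ (AdjoinRoot.mk _ q) = aeval AQ q := fun q => rfl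
  have hψ : Function.Injective ψ := ψ.injective
  obtain ⟨hnf, hdim⟩ := aux_nf2 (AdjoinRoot AQ.charpoly) (d := n)
    ((AdjoinRoot.powerBasis hmon.ne_zero).finite) (by
      rw [(AdjoinRoot.powerBasis hmon.ne_zero).finrank, AdjoinRoot.powerBasis_dim,
        Matrix.charpoly_natDegree_eq_dim, Fintype.card_fin])
  obtain ⟨f, hf⟩ := aux_hom A (AdjoinRoot AQ.charpoly) ψ hψ (by
    intro T hT
    obtain ⟨q, hq⟩ := aux_cyclic AQ ((Int.castRingHom ℚ).mapMatrix T) hirr (by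
      rw [← map_mul, ← map_mul, hT])
    exact ⟨AdjoinRoot.mk _ q, (hψm q).trans hq⟩) H hH
  refine ⟨fun a b => hf (by rw [map_mul, map_mul, mul_comm]), aux_fg inferInstance f hf, ?_⟩
  intro h2 hroot
  have := aux_finite_units (AdjoinRoot AQ.charpoly) (hdim.trans h2) (by
    intro g
    apply hroot (g (AdjoinRoot.root _))
    have h1 := AdjoinRoot.eval₂_root AQ.charpoly
    have h2 := congrArg g h1
    rw [hom_eval₂, map_zero, ← eval_map] at h2
    rw [IsRoot.def, ← h2]
    have h3 : A.charpoly.map (Int.castRingHom ℝ) =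
        AQ.charpoly.map (g.comp (AdjoinRoot.of AQ.charpoly)) := by
      generalize g.comp (AdjoinRoot.of AQ.charpoly) = g'
      rw [hchar, Polynomial.map_map]
      congr 1
      exact RingHom.ext_int _ _
    rw [h3])
  exact Finite.of_injective f hf

/-- `N⃗(X_A)` is the centralizer of `A` in `GL_n(ℤ)`; it is a
commutative, finitely generated group, finite when `n = 2` and `h_A` has no real
roots. -/
theorem stmt18 (n : ℕ) (A : Matrix (Fin n) (Fin n) ℤ) (hA : A.det ≠ 0)
    (hirr : Irreducible (A.charpoly.map (Int.castRingHom ℚ)))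
    (hP' : (Pbad A).Nonempty)
    (hcop : ∃ p : ℕ, p.Prime ∧ Nat.gcd n (tp A p) = 1) :
    ({T : Matrix (Fin n) (Fin n) ℤ | Ncond A T} =
        {T : Matrix (Fin n) (Fin n) ℤ | (T.det = 1 ∨ T.det = -1) ∧ T * A = A * T}) ∧
      ∃ H : Subgroup (Matrix (Fin n) (Fin n) ℤ)ˣ,
        (∀ T : (Matrix (Fin n) (Fin n) ℤ)ˣ, T ∈ H ↔ Ncond A (T : Matrix (Fin n) (Fin n) ℤ)) ∧
        (∀ a b : H, a * b = b * a) ∧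
        Group.FG H ∧
        (n = 2 → (∀ r : ℝ, ¬ (A.charpoly.map (Int.castRingHom ℝ)).IsRoot r) →
          Finite H) := by
  have key : ∀ T : Matrix (Fin n) (Fin n) ℤ,
      Ncond A T ↔ (T.det = 1 ∨ T.det = -1) ∧ T * A = A * T := fun T =>
    ⟨fun h => ⟨h.1, aux_main_s18 A hA hirr hcop T h⟩, aux_ncond_conv A T hA⟩
  refine ⟨Set.ext key, ?_⟩
  let H : Subgroup (Matrix (Fin n) (Fin n) ℤ)ˣ :=
    { carrier := {x | Commute (x : Matrix (Fin n) (Fin n) ℤ) A}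
      mul_mem' := fun {a b} ha hb => by
        change Commute ((a * b : (Matrix (Fin n) (Fin n) ℤ)ˣ) : Matrix (Fin n) (Fin n) ℤ) A
        rw [Units.val_mul]
        exact Commute.mul_left ha hb
      one_mem' := Commute.one_left A
      inv_mem' := fun {a} ha => Commute.units_inv_left ha }
  have hH : ∀ T : (Matrix (Fin n) (Fin n) ℤ)ˣ,
      T ∈ H ↔ (T : Matrix (Fin n) (Fin n) ℤ) * A = A * T := fun T => Iff.rfl
  refine ⟨H, ?_, aux_group A hirr H (fun T hT => (hH T).1 hT)⟩
  intro T
  rw [hH, key]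
  refine ⟨fun h => ⟨?_, h⟩, fun h => h.2⟩
  exact Int.isUnit_iff.1 ((Matrix.isUnit_iff_isUnit_det _).1 T.isUnit)
end
end
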